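/- Assume the probability measures μ₁,…,μ_n satisfy Assumption A and M⁻_{μ,𝔓} ≠ ∅. Let G : ℝ₊^n → [−∞, ∞) be upper semi-continuous with G(s₁,…,s_n) ≤ K(1 + s₁ + … + s_n) for some constant K. Then sup_{ℙ ∈ M⁻_{μ,𝔓}} E_ℙ[G] = inf{Σ_{i=0}^n ∫ u_i dμ_i : u_i : ℝ₊ → ℝ of linear growth and Δ_i : ℝ₊^i → ℝ₊ bounded measurable such that Σ_{i=0}^n u_i(S_i) + Σ_{i=0}^{n−1} Δ_i(S₁,…,S_i)(S_{i+1} − S_i) ≥ G(S) on 𝔓}, where μ₀ = δ_{s₀}; and this common value equals the superhedging price V_{μ,𝔓}(G) using static positions in call options priced by c_i(K) = ∫(x − K)⁺ μ_i(dx) and bounded nonnegative Δ_i. Further, if ∫ x μ_i(dx) = s₀ for all i = 1,…,n, the same equalities hold when the dynamic positions Δ_i : ℝ₊^i → ℝ are allowed to take both signs. -/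

import Mathlib

open MeasureTheory Set Filter Topology
open scoped ENNReal NNReal Classical

noncomputable section

namespace RobustFin

/-- Canonical path space: the values `S₀, S₁, …, S_n` of the asset. -/
abbrev Path (n : ℕ) := Fin (n + 1) → ℝ

/-- Paths starting at `s₀` with nonnegative coordinates: the canonical space `Ω`. -/
def Omega (n : ℕ) (s₀ : ℝ) : Set (Path n) := {ω | ω 0 = s₀ ∧ ∀ i, 0 ≤ ω i}

/-- The first `j` coordinates `S₁, …, S_j` of a path. -/
def restr {n : ℕ} (j : Fin n) (ω : Path n) : Fin j → ℝ :=
  fun i => ω ⟨(i : ℕ) + 1, by have h1 := i.isLt; have h2 := j.isLt; omega⟩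

/-- The coordinates `S₁, …, S_n` of a path. -/
def tailCoords {n : ℕ} (ω : Path n) : Fin n → ℝ := fun i => ω i.succ

/-- A dynamic trading strategy: bounded measurable positions `Δ_j(S₁,…,S_j)`. -/
structure Dyn (n : ℕ) where
  pos : (j : Fin n) → (Fin j → ℝ) → ℝ
  meas : ∀ j, Measurable (pos j)
  bdd : ∀ j, ∃ C, ∀ x, |pos j x| ≤ C

/-- No short selling: all dynamic positions are nonnegative. -/
def Dyn.Nonneg {n : ℕ} (D : Dyn n) : Prop := ∀ j x, 0 ≤ D.pos j x

/-- Gains from dynamic trading: `Σ_j Δ_j(S₁,…,S_j)(S_{j+1} − S_j)`. -/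
def Dyn.gains {n : ℕ} (D : Dyn n) (ω : Path n) : ℝ :=
  ∑ j : Fin n, D.pos j (restr j ω) * (ω j.succ - ω j.castSucc)

/-- A static option portfolio: a constant (cash) position plus a finite linear
combination of options with maturity indices `idx` and nonnegative strikes. -/
structure Static (n : ℕ) where
  const : ℝ
  m : ℕ
  coeff : Fin m → ℝ
  idx : Fin m → Fin n
  strike : Fin m → ℝ
  strike_nonneg : ∀ k, 0 ≤ strike k

/-- Payoff of the portfolio when the options are call options. -/
def Static.callPayoff {n : ℕ} (X : Static n) (ω : Path n) : ℝ :=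
  X.const + ∑ k, X.coeff k * max (ω (X.idx k).succ - X.strike k) 0

/-- Payoff of the portfolio when the options are put options. -/
def Static.putPayoff {n : ℕ} (X : Static n) (ω : Path n) : ℝ :=
  X.const + ∑ k, X.coeff k * max (X.strike k - ω (X.idx k).succ) 0

/-- Price of a static portfolio, given the unit option prices `c i K`;
this is the (unique) linear pricing functional determined by the prices. -/
def Static.price {n : ℕ} (X : Static n) (c : Fin n → ℝ → ℝ) : ℝ :=
  X.const + ∑ k, X.coeff k * c (X.idx k) (X.strike k)

/-- Expectation of a real payoff, valued in `EReal`, with the convention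
`∞ − ∞ = −∞` (in `EReal`, `⊤ - ⊤ = ⊥`). -/
def eexp {n : ℕ} (P : Measure (Path n)) (f : Path n → ℝ) : EReal :=
  ((∫⁻ ω, ENNReal.ofReal (f ω) ∂P : ℝ≥0∞) : EReal) -
    ((∫⁻ ω, ENNReal.ofReal (-(f ω)) ∂P : ℝ≥0∞) : EReal)

/-- The positive part of an extended real number, in `ℝ≥0∞`. -/
def posE (x : EReal) : ℝ≥0∞ := if x = ⊤ then ⊤ else ENNReal.ofReal x.toReal

/-- Expectation of an `EReal`-valued payoff, with the convention `∞ − ∞ = −∞`. -/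
def eexpE {n : ℕ} (P : Measure (Path n)) (f : Path n → EReal) : EReal :=
  ((∫⁻ ω, posE (f ω) ∂P : ℝ≥0∞) : EReal) - ((∫⁻ ω, posE (-(f ω)) ∂P : ℝ≥0∞) : EReal)

/-- A market calibrated model for the market with static payoffs `pay` (calls or puts),
prices `c` and prediction set `P`. -/
def Calibrated {n : ℕ} (pay : Static n → Path n → ℝ) (c : Fin n → ℝ → ℝ)
    (P : Set (Path n)) (Q : Measure (Path n)) : Prop :=
  IsProbabilityMeasure Q ∧ Q P = 1 ∧
    ∀ (X : Static n) (D : Dyn n), D.Nonneg →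
      eexp Q (fun ω => pay X ω + D.gains ω) ≤ (X.price c : EReal)

/-- A weak free lunch with vanishing risk. -/
def WFLVR {n : ℕ} (pay : Static n → Path n → ℝ) (c : Fin n → ℝ → ℝ)
    (P : Set (Path n)) : Prop :=
  ∃ (Xs : ℕ → Static n) (Ds : ℕ → Dyn n) (X : Static n) (D : Dyn n) (L : ℝ),
    (∀ k, (Ds k).Nonneg) ∧ D.Nonneg ∧
    (∀ ω ∈ P, Tendsto (fun k => pay (Xs k) ω + (Ds k).gains ω) atTop (nhds 0)) ∧
    (∀ k, ∀ ω ∈ P, pay X ω + D.gains ω ≤ pay (Xs k) ω + (Ds k).gains ω) ∧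
    Tendsto (fun k => (Xs k).price c) atTop (nhds L) ∧ L < 0

/-- A robust uniformly strong arbitrage. -/
def RobustArbitrage {n : ℕ} (pay : Static n → Path n → ℝ) (c : Fin n → ℝ → ℝ)
    (P : Set (Path n)) : Prop :=
  ∃ (X : Static n) (D : Dyn n), D.Nonneg ∧ X.price c < 0 ∧
    ∀ ω ∈ P, 0 ≤ pay X ω + D.gains ω

/-- The superhedging price of `G` over semi-static strategies (no short selling). -/
def V {n : ℕ} (pay : Static n → Path n → ℝ) (c : Fin n → ℝ → ℝ)
    (P : Set (Path n)) (G : Path n → EReal) : EReal :=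
  sInf {q : EReal | ∃ (X : Static n) (D : Dyn n), D.Nonneg ∧ q = (X.price c : EReal) ∧
    ∀ ω ∈ P, G ω ≤ ((pay X ω + D.gains ω : ℝ) : EReal)}

/-- The superhedging price of `G` when the dynamic positions may take both signs. -/
def Vsigned {n : ℕ} (pay : Static n → Path n → ℝ) (c : Fin n → ℝ → ℝ)
    (P : Set (Path n)) (G : Path n → EReal) : EReal :=
  sInf {q : EReal | ∃ (X : Static n) (D : Dyn n), q = (X.price c : EReal) ∧
    ∀ ω ∈ P, G ω ≤ ((pay X ω + D.gains ω : ℝ) : EReal)}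

/-- `Π_μ`: probability measures on the path space with marginals `δ_{s₀}, μ₁, …, μ_n`. -/
def PiMu {n : ℕ} (s₀ : ℝ) (μ : Fin n → Measure ℝ) : Set (Measure (Path n)) :=
  {π | IsProbabilityMeasure π ∧ π (Omega n s₀) = 1 ∧
       ∀ i : Fin n, π.map (fun ω => ω i.succ) = μ i}

/-- The coordinate process is a supermartingale in its natural filtration:
for every Borel `A ⊆ ℝ₊^j`, `∫ 1_A(S₁,…,S_j)(S_{j+1} − S_j) dπ ≤ 0`. -/
def IsSupermartingaleLaw {n : ℕ} (π : Measure (Path n)) : Prop :=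
  ∀ (j : Fin n) (A : Set (Fin j → ℝ)), MeasurableSet A →
    ∫ ω, Set.indicator A (fun _ => (1 : ℝ)) (restr j ω) * (ω j.succ - ω j.castSucc) ∂π ≤ 0

/-- `M⁻_μ`: calibrated supermartingale measures. -/
def MSet {n : ℕ} (s₀ : ℝ) (μ : Fin n → Measure ℝ) : Set (Measure (Path n)) :=
  {π ∈ PiMu s₀ μ | IsSupermartingaleLaw π}

/-- `M⁻_{μ,𝔓}`: calibrated supermartingale measures giving full mass to `P`. -/
def MSetP {n : ℕ} (s₀ : ℝ) (μ : Fin n → Measure ℝ) (P : Set (Path n)) :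
    Set (Measure (Path n)) :=
  {π ∈ MSet s₀ μ | π P = 1}

/-- Assumption A on the marginals. -/
def AssumptionA {n : ℕ} (s₀ : ℝ) (μ : Fin n → Measure ℝ) : Prop :=
  (∀ i, ∫ x, x ∂(μ i) ≤ s₀) ∧
  (∀ i j : Fin n, i ≤ j → ∫ x, x ∂(μ j) ≤ ∫ x, x ∂(μ i)) ∧
  (∀ φ : ℝ → ℝ, ConcaveOn ℝ Set.univ φ → Monotone φ → (∀ x, 0 ≤ φ x) →
    ∀ i j : Fin n, i ≤ j → ∫ x, φ x ∂(μ j) ≤ ∫ x, φ x ∂(μ i))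

/-- Condition C (i): each `c_i` is nonnegative, convex and nonincreasing on `ℝ₊`. -/
def CondC1 {n : ℕ} (c : Fin n → ℝ → ℝ) : Prop :=
  ∀ i, (∀ x, 0 ≤ x → 0 ≤ c i x) ∧ ConvexOn ℝ (Set.Ici 0) (c i) ∧ AntitoneOn (c i) (Set.Ici 0)

/-- Condition C (ii): `s₀ ≥ c₁(0) ≥ … ≥ c_n(0) ≥ 0` and `c_i'(0+) ≥ −1`
(the latter expressed, for convex `c_i`, through the slopes at `0`). -/
def CondC2 {n : ℕ} (s₀ : ℝ) (c : Fin n → ℝ → ℝ) : Prop :=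
  (∀ i, c i 0 ≤ s₀) ∧ (∀ i j : Fin n, i ≤ j → c j 0 ≤ c i 0) ∧ (∀ i, 0 ≤ c i 0) ∧
    (∀ i, ∀ K : ℝ, 0 < K → c i 0 - K ≤ c i K)

/-- Condition C (iii): `c_i(K) → 0` as `K → ∞`. -/
def CondC3 {n : ℕ} (c : Fin n → ℝ → ℝ) : Prop :=
  ∀ i, Tendsto (c i) atTop (nhds 0)

/-- Condition C (iv): for every `x ≥ 0`, `c_i(0) − c_i(x)` is nonincreasing in `i`. -/
def CondC4 {n : ℕ} (c : Fin n → ℝ → ℝ) : Prop :=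
  ∀ x : ℝ, 0 ≤ x → ∀ i j : Fin n, i ≤ j → c j 0 - c j x ≤ c i 0 - c i x

/-- Condition C. -/
def CondC {n : ℕ} (s₀ : ℝ) (c : Fin n → ℝ → ℝ) : Prop :=
  CondC1 c ∧ CondC2 s₀ c ∧ CondC3 c ∧ CondC4 c

/-- Condition P (i). -/
def CondP1 {n : ℕ} (p : Fin n → ℝ → ℝ) : Prop :=
  ∀ i, (∀ x, 0 ≤ x → 0 ≤ p i x) ∧ ConvexOn ℝ (Set.Ici 0) (p i) ∧ MonotoneOn (p i) (Set.Ici 0)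

/-- Condition P (ii): `s₀ ≥ lim (x − p₁(x)) ≥ … ≥ 0` and `0 ≤ p_i'(0+) ≤ 1`. -/
def CondP2 {n : ℕ} (s₀ : ℝ) (p : Fin n → ℝ → ℝ) : Prop :=
  (∃ L : Fin n → ℝ,
    (∀ i, Tendsto (fun x => x - p i x) atTop (nhds (L i))) ∧
    (∀ i, L i ≤ s₀) ∧ (∀ i j : Fin n, i ≤ j → L j ≤ L i) ∧ (∀ i, 0 ≤ L i)) ∧
  (∃ d : Fin n → ℝ,
    (∀ i, Tendsto (fun K => (p i K - p i 0) / K) (nhdsWithin 0 (Set.Ioi 0)) (nhds (d i))) ∧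
    (∀ i, 0 ≤ d i ∧ d i ≤ 1))

/-- Condition P (iii): `p_i(K) → 0` as `K → 0` (within `ℝ₊`). -/
def CondP3 {n : ℕ} (p : Fin n → ℝ → ℝ) : Prop :=
  ∀ i, Tendsto (p i) (nhdsWithin 0 (Set.Ici 0)) (nhds 0)

/-- Condition P (iv): `p_i(x)` is nondecreasing in `i`. -/
def CondP4 {n : ℕ} (p : Fin n → ℝ → ℝ) : Prop :=
  ∀ x : ℝ, 0 ≤ x → ∀ i j : Fin n, i ≤ j → p i x ≤ p j x

/-- Condition P. -/
def CondP {n : ℕ} (s₀ : ℝ) (p : Fin n → ℝ → ℝ) : Prop :=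
  CondP1 p ∧ CondP2 s₀ p ∧ CondP3 p ∧ CondP4 p

/-- The measures `μ_i` defined from the put prices by `μ_i([0,K]) = p_i'(K)`;
equivalently, `p_i(K) = ∫ (K − x)⁺ μ_i(dx)`. -/
def PutPricesFrom {n : ℕ} (p : Fin n → ℝ → ℝ) (μ : Fin n → Measure ℝ) : Prop :=
  (∀ i, IsProbabilityMeasure (μ i)) ∧ (∀ i, μ i (Set.Iio 0) = 0) ∧
  (∀ i, Integrable (fun x => x) (μ i)) ∧
  (∀ i, ∀ K : ℝ, 0 ≤ K → p i K = ∫ x, max (K - x) 0 ∂(μ i))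

/-- The path `(s₀, s₁, …, s_i, x, s_{i+2}, …, s_n)`. -/
def mkPath {n : ℕ} (s₀ : ℝ) (i : Fin n) (s : Fin i → ℝ) (x : ℝ)
    (t : Fin (n - ((i : ℕ) + 1)) → ℝ) : Path n := fun j =>
  if h0 : (j : ℕ) = 0 then s₀
  else if h1 : (j : ℕ) ≤ (i : ℕ) then
    s ⟨(j : ℕ) - 1, by have := j.isLt; have := i.isLt; omega⟩
  else if h2 : (j : ℕ) = (i : ℕ) + 1 then x
  else t ⟨(j : ℕ) - (i : ℕ) - 2, by have := j.isLt; have := i.isLt; omega⟩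

/-- The family `β_i : ℝ₊^i → ℝ` defined recursively by `β_n = 0` and
`β_i(s₁,…,s_i) = (sup_{s_{i+2},…,s_n} limsup_{x→∞} ((β_{i+1}(s₁,…,s_i,x)
 + G(s₁,…,s_i,x,s_{i+2},…,s_n)/x)·1_𝔓)) ∨ 0`. -/
def IsBetaFamily {n : ℕ} (s₀ : ℝ) (P : Set (Path n)) (G : (Fin n → ℝ) → EReal)
    (β : (i : Fin (n + 1)) → (Fin i → ℝ) → ℝ) : Prop :=
  (∀ s, β (Fin.last n) s = 0) ∧
  ∀ (i : Fin n) (s : Fin i → ℝ), (∀ k, 0 ≤ s k) →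
    (β ⟨(i : ℕ), by have := i.isLt; omega⟩ s : EReal) =
      max 0 (⨆ (t : Fin (n - ((i : ℕ) + 1)) → ℝ) (_ : ∀ k, 0 ≤ t k),
        Filter.limsup (fun x : ℝ =>
          if mkPath s₀ i s x t ∈ P then
            ((β ⟨(i : ℕ) + 1, by have := i.isLt; omega⟩ (Fin.snoc s x) : ℝ) : EReal)
              + G (tailCoords (mkPath s₀ i s x t)) * ((x⁻¹ : ℝ) : EReal)
          else 0) Filter.atTop)

/-- Gains of the dynamic strategy `(β_i)`: `β₀(S₁ − s₀) + Σ_i β_i(S₁,…,S_i)(S_{i+1} − S_i)`. -/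
def gainsOf {n : ℕ} (β : (i : Fin (n + 1)) → (Fin i → ℝ) → ℝ) (ω : Path n) : ℝ :=
  ∑ j : Fin n, β ⟨(j : ℕ), by have := j.isLt; omega⟩ (restr j ω) * (ω j.succ - ω j.castSucc)

/-- The penalty function `λ_𝔓(s₁,…,s_n) = (1 + s₁ + … + s_n)·1{(s₁,…,s_n) ∉ 𝔓}`. -/
def lambdaP {n : ℕ} (P : Set (Path n)) (ω : Path n) : ℝ :=
  if ω ∈ P then 0 else 1 + ∑ i : Fin n, ω i.succ

/-- `min(s₀, s₁, …, s_m)`. -/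
def pmin {m : ℕ} (s₀ : ℝ) (s : Fin m → ℝ) : ℝ :=
  Finset.univ.inf' Finset.univ_nonempty
    (fun j : Fin (m + 1) =>
      if h : (j : ℕ) = 0 then s₀ else s ⟨(j : ℕ) - 1, by have := j.isLt; omega⟩)

/-- `max(s₀, s₁, …, s_m)`. -/
def pmax {m : ℕ} (s₀ : ℝ) (s : Fin m → ℝ) : ℝ :=
  Finset.univ.sup' Finset.univ_nonempty
    (fun j : Fin (m + 1) =>
      if h : (j : ℕ) = 0 then s₀ else s ⟨(j : ℕ) - 1, by have := j.isLt; omega⟩)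


/-- Cost `Σ_{i=0}^n ∫ u_i dμ_i` of a vector of static functions, with `μ₀ = δ_{s₀}`. -/
def linGrowthCost {n : ℕ} (s₀ : ℝ) (μ : Fin n → Measure ℝ) (u : Fin (n + 1) → ℝ → ℝ) : ℝ :=
  u 0 s₀ + ∑ i : Fin n, ∫ x, u i.succ x ∂(μ i)

/-! ### Measure-theoretic preliminaries -/

theorem aux_gain_nonpos {Ω Y : Type*} [MeasurableSpace Ω] [MeasurableSpace Y] (Q : Measure Ω)
    {r : Ω → Y} (hr : Measurable r) {Z : Ω → ℝ} (hZ : Integrable Z Q)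
    (h : ∀ A, MeasurableSet A → ∫ ω, Set.indicator A (fun _ => (1 : ℝ)) (r ω) * Z ω ∂Q ≤ 0)
    {g : Y → ℝ} (hg : Measurable g) (hg0 : ∀ y, 0 ≤ g y) {C : ℝ} (hC : ∀ y, g y ≤ C) :
    ∫ ω, g (r ω) * Z ω ∂Q ≤ 0 := by
  have hZm := hZ.aestronglyMeasurable.aemeasurable
  have hle : (Q.withDensity fun ω => ENNReal.ofReal (Z ω)).map r ≤
      (Q.withDensity fun ω => ENNReal.ofReal (-Z ω)).map r := by
    rw [Measure.le_iff]
    intro s hs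
    rw [Measure.map_apply hr hs, Measure.map_apply hr hs, withDensity_apply _ (hr hs),
      withDensity_apply _ (hr hs)]
    have h1 := h s hs
    have h2 : ∫ ω, Set.indicator s (fun _ => (1 : ℝ)) (r ω) * Z ω ∂Q
        = ∫ ω in r ⁻¹' s, Z ω ∂Q := by
      rw [← integral_indicator (hr hs)]
      congr 1
      ext ω
      by_cases hω : r ω ∈ s <;> simp [Set.indicator, hω]
    rw [h2, integral_eq_lintegral_pos_part_sub_lintegral_neg_part hZ.integrableOn] at h1
    have f1 : ∫⁻ ω in r ⁻¹' s, ENNReal.ofReal (Z ω) ∂Q ≠ ⊤ := by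
      have := hZ.integrableOn (s := r ⁻¹' s)
      exact (this.lintegral_lt_top).ne
    have f2 : ∫⁻ ω in r ⁻¹' s, ENNReal.ofReal (-Z ω) ∂Q ≠ ⊤ := by
      have := hZ.neg.integrableOn (s := r ⁻¹' s)
      exact (this.lintegral_lt_top).ne
    exact (ENNReal.toReal_le_toReal f1 f2).1 (by linarith)
  have hint : Integrable (fun ω => g (r ω) * Z ω) Q := by
    refine hZ.bdd_mul (c := C) (hg.comp hr).aestronglyMeasurable ?_
    filter_upwards with ω
    rw [Real.norm_eq_abs, abs_of_nonneg (hg0 _)]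
    exact hC _
  rw [integral_eq_lintegral_pos_part_sub_lintegral_neg_part hint]
  have hgr : Measurable fun a => ENNReal.ofReal (g (r a)) := (hg.comp hr).ennreal_ofReal
  have hZn : AEMeasurable (fun ω => ENNReal.ofReal (-Z ω)) Q := hZm.neg.ennreal_ofReal
  have key := lintegral_mono' hle (le_refl (fun y => ENNReal.ofReal (g y)))
  rw [lintegral_map hg.ennreal_ofReal hr, lintegral_map hg.ennreal_ofReal hr,
    lintegral_withDensity_eq_lintegral_mul₀ hZm.ennreal_ofReal
      hgr.aemeasurable,
    lintegral_withDensity_eq_lintegral_mul₀ hZn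
      hgr.aemeasurable] at key
  have e1 : ∫⁻ ω, ENNReal.ofReal (g (r ω) * Z ω) ∂Q =
      ∫⁻ ω, ((fun ω => ENNReal.ofReal (Z ω)) * fun a => ENNReal.ofReal (g (r a))) ω ∂Q := by
    congr 1; ext ω
    simp only [Pi.mul_apply]
    rw [mul_comm (ENNReal.ofReal (Z ω)), ENNReal.ofReal_mul (hg0 _)]
  have e2 : ∫⁻ ω, ENNReal.ofReal (-(g (r ω) * Z ω)) ∂Q =
      ∫⁻ ω, ((fun ω => ENNReal.ofReal (-Z ω)) * fun a => ENNReal.ofReal (g (r a))) ω ∂Q := by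
    congr 1; ext ω
    simp only [Pi.mul_apply]
    rw [mul_comm (ENNReal.ofReal (-Z ω)), ← ENNReal.ofReal_mul (hg0 _), mul_neg]
  have f2 : ∫⁻ ω, ENNReal.ofReal (-(g (r ω) * Z ω)) ∂Q ≠ ⊤ := hint.neg.lintegral_lt_top.ne
  rw [← e1, ← e2] at key
  have := ENNReal.toReal_mono f2 key
  linarith

theorem aux_closed_to_borel {Ω Y : Type*} [MeasurableSpace Ω] [MeasurableSpace Y]
    [PseudoMetricSpace Y] [BorelSpace Y] (Q : Measure Ω)
    {r : Ω → Y} (hr : Measurable r) {Z : Ω → ℝ} (hZ : Integrable Z Q)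
    (h : ∀ A, IsClosed A → ∫ ω, Set.indicator A (fun _ => (1 : ℝ)) (r ω) * Z ω ∂Q ≤ 0)
    (A : Set Y) (hA : MeasurableSet A) :
    ∫ ω, Set.indicator A (fun _ => (1 : ℝ)) (r ω) * Z ω ∂Q ≤ 0 := by
  have conv : ∀ s, MeasurableSet s → ∫ ω, Set.indicator s (fun _ => (1 : ℝ)) (r ω) * Z ω ∂Q
        = ∫ ω in r ⁻¹' s, Z ω ∂Q := by
    intro s hs
    rw [← integral_indicator (hr hs)]
    congr 1
    ext ω
    by_cases hω : r ω ∈ s <;> simp [Set.indicator, hω]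
  rw [conv A hA]
  set ν : Measure Y := (Q.withDensity fun ω => ENNReal.ofReal |Z ω|).map r with hν
  have hfin : IsFiniteMeasure ν := by
    have : IsFiniteMeasure (Q.withDensity fun ω => ENNReal.ofReal |Z ω|) :=
      isFiniteMeasure_withDensity_ofReal hZ.abs.2
    exact Measure.isFiniteMeasure_map _ _
  refine le_of_forall_pos_le_add fun ε hε => ?_
  obtain ⟨F, hFA, hFc, hF⟩ := hA.exists_isClosed_sdiff_lt (μ := ν) (measure_ne_top _ _)
    (ε := ENNReal.ofReal ε) (by simpa using hε)
  have hFm := hFc.measurableSet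
  have e : ∫ ω in r ⁻¹' A, Z ω ∂Q = ∫ ω in r ⁻¹' F, Z ω ∂Q + ∫ ω in r ⁻¹' (A \ F), Z ω ∂Q := by
    rw [← setIntegral_union _ (hr (hA.diff hFm)) hZ.integrableOn hZ.integrableOn,
      ← preimage_union, union_sdiff_cancel hFA]
    exact (disjoint_sdiff_right).preimage r
  have h1 := h F hFc
  rw [conv F hFm] at h1
  have h2 : ∫ ω in r ⁻¹' (A \ F), Z ω ∂Q ≤ ε := by
    calc ∫ ω in r ⁻¹' (A \ F), Z ω ∂Q ≤ ∫ ω in r ⁻¹' (A \ F), |Z ω| ∂Q :=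
          integral_mono hZ.integrableOn hZ.abs.integrableOn fun ω => le_abs_self _
      _ = (ν (A \ F)).toReal := by
          rw [hν, Measure.map_apply hr (hA.diff hFm), withDensity_apply _ (hr (hA.diff hFm)),
            integral_eq_lintegral_of_nonneg_ae (by filter_upwards with ω using abs_nonneg _)
              hZ.abs.integrableOn.aestronglyMeasurable]
      _ ≤ ε := ENNReal.toReal_le_of_le_ofReal hε.le hF.le
  rw [e]; linarith

theorem aux_cont_to_borel {Ω Y : Type*} [MeasurableSpace Ω] [MeasurableSpace Y]
    [PseudoMetricSpace Y] [BorelSpace Y] (Q : Measure Ω)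
    {r : Ω → Y} (hr : Measurable r) {Z : Ω → ℝ} (hZ : Integrable Z Q)
    (h : ∀ g : Y → ℝ, Continuous g → (∀ y, 0 ≤ g y) → (∀ y, g y ≤ 1) →
      ∫ ω, g (r ω) * Z ω ∂Q ≤ 0)
    (A : Set Y) (hA : MeasurableSet A) :
    ∫ ω, Set.indicator A (fun _ => (1 : ℝ)) (r ω) * Z ω ∂Q ≤ 0 := by
  refine aux_closed_to_borel Q hr hZ ?_ A hA
  intro F hF
  have hpos : ∀ k : ℕ, (0 : ℝ) < 1 / ((k : ℝ) + 1) := fun k => Nat.one_div_pos_of_nat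
  have ht := thickenedIndicator_tendsto_indicator_closure hpos
    tendsto_one_div_add_atTop_nhds_zero_nat F
  rw [tendsto_pi_nhds] at ht
  have hlim : Tendsto (fun k : ℕ => ∫ ω, (thickenedIndicator (hpos k) F (r ω) : ℝ) * Z ω ∂Q) atTop
      (𝓝 (∫ ω, Set.indicator F (fun _ => (1 : ℝ)) (r ω) * Z ω ∂Q)) := by
    refine tendsto_integral_of_dominated_convergence (fun ω => |Z ω|) ?_ hZ.abs ?_ ?_
    · intro k
      refine AEStronglyMeasurable.mul ?_ hZ.aestronglyMeasurable
      refine Measurable.aestronglyMeasurable ?_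
      exact ((NNReal.continuous_coe.comp (thickenedIndicator (hpos k) F).continuous).measurable).comp hr
    · intro k
      filter_upwards with ω
      rw [norm_mul, Real.norm_eq_abs, Real.norm_eq_abs, abs_of_nonneg (NNReal.coe_nonneg _)]
      have : (thickenedIndicator (hpos k) F (r ω) : ℝ) ≤ 1 := by
        exact_mod_cast thickenedIndicator_le_one (hpos k) F (r ω)
      nlinarith [abs_nonneg (Z ω)]
    · filter_upwards with ω
      refine Tendsto.mul_const _ ?_
      have h1 := ht (r ω)
      rw [hF.closure_eq] at h1
      have h2 := (NNReal.continuous_coe.tendsto _).comp h1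
      have e : Set.indicator F (fun _ => (1 : ℝ)) (r ω) =
          ((Set.indicator F (fun _ => (1 : ℝ≥0)) (r ω) : ℝ≥0) : ℝ) := by
        by_cases hω : r ω ∈ F <;> simp [Set.indicator, hω]
      rw [e]
      exact h2
  refine le_of_tendsto' hlim fun k => ?_
  refine h (fun y => (thickenedIndicator (hpos k) F y : ℝ))
    (NNReal.continuous_coe.comp (thickenedIndicator (hpos k) F).continuous)
    (fun y => NNReal.coe_nonneg _) (fun y => ?_)
  exact_mod_cast thickenedIndicator_le_one (hpos k) F y

theorem aux_call_integrable {μ : Measure ℝ} [IsFiniteMeasure μ] (h : Integrable (fun x => x) μ)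
    (K : ℝ) : Integrable (fun x => max (x - K) 0) μ :=
  (h.sub (integrable_const K)).pos_part

theorem aux_call_tendsto {μ : Measure ℝ} [IsFiniteMeasure μ] (h : Integrable (fun x => x) μ) :
    Tendsto (fun R : ℕ => ∫ x, max (x - (R : ℝ)) 0 ∂μ) atTop (𝓝 0) := by
  have := tendsto_integral_of_dominated_convergence (μ := μ)
    (F := fun (R : ℕ) (x : ℝ) => max (x - (R : ℝ)) 0) (f := fun _ => 0) (fun x => |x|)
    (fun R => (aux_call_integrable h _).aestronglyMeasurable) h.abs ?_ ?_
  · simpa using this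
  · intro R
    filter_upwards with x
    rw [Real.norm_eq_abs, abs_of_nonneg (le_max_right _ _)]
    have : (0 : ℝ) ≤ R := Nat.cast_nonneg R
    exact max_le (by linarith [le_abs_self x]) (abs_nonneg _)
  · filter_upwards with x
    obtain ⟨N, hN⟩ := exists_nat_gt x
    refine tendsto_const_nhds.congr' ?_
    filter_upwards [eventually_ge_atTop N] with R hR
    have : (N : ℝ) ≤ R := by exact_mod_cast hR
    rw [max_eq_right (by linarith)]

theorem aux_call_ioi {μ : Measure ℝ} [IsProbabilityMeasure μ] (h : Integrable (fun x => x) μ)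
    (K : ℝ) : Tendsto (fun m : ℕ => ((m : ℝ) + 1) * (∫ x, max (x - K) 0 ∂μ -
      ∫ x, max (x - (K + 1 / ((m : ℝ) + 1))) 0 ∂μ)) atTop (𝓝 (μ.real (Ioi K))) := by
  have e : ∀ m : ℕ, ((m : ℝ) + 1) * (∫ x, max (x - K) 0 ∂μ -
      ∫ x, max (x - (K + 1 / ((m : ℝ) + 1))) 0 ∂μ) =
      ∫ x, ((m : ℝ) + 1) * (max (x - K) 0 - max (x - (K + 1 / ((m : ℝ) + 1))) 0) ∂μ := by
    intro m
    rw [integral_const_mul, integral_sub (aux_call_integrable h _) (aux_call_integrable h _)]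
  simp_rw [e]
  rw [← integral_indicator_one measurableSet_Ioi]
  refine tendsto_integral_of_dominated_convergence (fun _ => (1 : ℝ)) ?_ (integrable_const _) ?_ ?_
  · intro m
    exact (((aux_call_integrable h _).sub (aux_call_integrable h _)).const_mul _).aestronglyMeasurable
  · intro m
    filter_upwards with x
    have hm : (0 : ℝ) < (m : ℝ) + 1 := by positivity
    have hd : (0 : ℝ) < 1 / ((m : ℝ) + 1) := by positivity
    have h0 : 0 ≤ max (x - K) 0 - max (x - (K + 1 / ((m : ℝ) + 1))) 0 := by
      have : max (x - (K + 1 / ((m : ℝ) + 1))) 0 ≤ max (x - K) 0 :=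
        max_le_max (by linarith) le_rfl
      linarith
    have h1 : max (x - K) 0 - max (x - (K + 1 / ((m : ℝ) + 1))) 0 ≤ 1 / ((m : ℝ) + 1) := by
      have a1 := le_max_left (x - (K + 1 / ((m : ℝ) + 1))) 0
      have a2 := le_max_right (x - (K + 1 / ((m : ℝ) + 1))) 0
      have : max (x - K) 0 ≤ max (x - (K + 1 / ((m : ℝ) + 1))) 0 + 1 / ((m : ℝ) + 1) :=
        max_le (by linarith) (by linarith)
      linarith
    rw [Real.norm_eq_abs, abs_of_nonneg (by positivity)]
    calc _ ≤ ((m : ℝ) + 1) * (1 / ((m : ℝ) + 1)) := by gcongr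
      _ = 1 := by field_simp
  · filter_upwards with x
    by_cases hx : K < x
    · have hx' : x ∈ Ioi K := hx
      simp only [hx', indicator_of_mem, Pi.one_apply]
      have hlim := (tendsto_one_div_add_atTop_nhds_zero_nat (𝕜 := ℝ)).eventually
        (gt_mem_nhds (show (0 : ℝ) < x - K by linarith))
      refine tendsto_const_nhds.congr' ?_
      filter_upwards [hlim] with m hm
      rw [max_eq_left (by linarith), max_eq_left (by linarith)]
      field_simp
      ring
    · have hx' : x ∉ Ioi K := hx
      rw [indicator_of_notMem hx']
      push Not at hx
      refine tendsto_const_nhds.congr fun m => ?_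
      have hd : (0 : ℝ) < 1 / ((m : ℝ) + 1) := by positivity
      rw [max_eq_right (by linarith), max_eq_right (by linarith)]
      simp

theorem aux_ext_calls {μ ν : Measure ℝ} [IsProbabilityMeasure μ] [IsProbabilityMeasure ν]
    (hμ : Integrable (fun x => x) μ) (hν : Integrable (fun x => x) ν)
    (hμ0 : μ (Iio 0) = 0) (hν0 : ν (Iio 0) = 0)
    (h : ∀ K : ℝ, 0 ≤ K → ∫ x, max (x - K) 0 ∂μ = ∫ x, max (x - K) 0 ∂ν) : μ = ν := by
  have hI : ∀ K : ℝ, μ (Ioi K) = ν (Ioi K) := by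
    intro K
    rcases lt_or_ge K 0 with hK | hK
    · have aux : ∀ ρ : Measure ℝ, IsProbabilityMeasure ρ → ρ (Iio 0) = 0 → ρ (Ioi K) = 1 := by
        intro ρ _ hρ
        rw [← compl_Iic, prob_compl_eq_one_iff measurableSet_Iic]
        exact measure_mono_null (fun x hx => lt_of_le_of_lt hx hK) hρ
      rw [aux μ inferInstance hμ0, aux ν inferInstance hν0]
    · have h1 := aux_call_ioi hμ K
      have h2 := aux_call_ioi hν K
      have e : ∀ m : ℕ, ((m : ℝ) + 1) * (∫ x, max (x - K) 0 ∂μ -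
          ∫ x, max (x - (K + 1 / ((m : ℝ) + 1))) 0 ∂μ) = ((m : ℝ) + 1) * (∫ x, max (x - K) 0 ∂ν -
          ∫ x, max (x - (K + 1 / ((m : ℝ) + 1))) 0 ∂ν) := by
        intro m
        rw [h K hK, h _ (by positivity)]
      simp_rw [e] at h1
      have := tendsto_nhds_unique h1 h2
      exact (measureReal_eq_measureReal_iff).1 this
  refine Measure.ext_of_Iic _ _ fun K => ?_
  rw [← compl_Ioi, prob_compl_eq_one_sub measurableSet_Ioi, prob_compl_eq_one_sub measurableSet_Ioi,
    hI]


/-! ### Static and dynamic portfolios -/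

/-- `φ` is the payoff of a static call portfolio of price `p`. -/
def IsStat {n : ℕ} (c : Fin n → ℝ → ℝ) (φ : Path n → ℝ) (p : ℝ) : Prop :=
  ∃ X : Static n, (∀ ω, X.callPayoff ω = φ ω) ∧ X.price c = p

/-- `φ` is the gain of a nonnegative dynamic strategy. -/
def IsGain {n : ℕ} (φ : Path n → ℝ) : Prop :=
  ∃ D : Dyn n, D.Nonneg ∧ ∀ ω, D.gains ω = φ ω

theorem IsStat.add {n : ℕ} {c : Fin n → ℝ → ℝ} {φ ψ : Path n → ℝ} {p q : ℝ}
    (h : IsStat c φ p) (h' : IsStat c ψ q) : IsStat c (fun ω => φ ω + ψ ω) (p + q) := by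
  obtain ⟨X, hX, rfl⟩ := h
  obtain ⟨Y, hY, rfl⟩ := h'
  refine ⟨⟨X.const + Y.const, X.m + Y.m, Fin.append X.coeff Y.coeff, Fin.append X.idx Y.idx,
    Fin.append X.strike Y.strike, ?_⟩, ?_, ?_⟩
  · intro k
    refine Fin.addCases (fun i => ?_) (fun i => ?_) k
    · simpa using X.strike_nonneg i
    · simpa using Y.strike_nonneg i
  · intro ω
    change _ = φ ω + ψ ω
    rw [← hX, ← hY]
    simp only [Static.callPayoff, Fin.sum_univ_add, Fin.append_left, Fin.append_right]
    ring
  · simp only [Static.price, Fin.sum_univ_add, Fin.append_left, Fin.append_right]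
    ring

theorem IsStat.smul {n : ℕ} {c : Fin n → ℝ → ℝ} {φ : Path n → ℝ} {p : ℝ}
    (h : IsStat c φ p) (a : ℝ) : IsStat c (fun ω => a * φ ω) (a * p) := by
  obtain ⟨X, hX, rfl⟩ := h
  refine ⟨⟨a * X.const, X.m, fun k => a * X.coeff k, X.idx, X.strike, X.strike_nonneg⟩, ?_, ?_⟩
  · intro ω
    change _ = a * φ ω
    rw [← hX]
    simp only [Static.callPayoff, mul_add, Finset.mul_sum, mul_assoc]
  · simp only [Static.price, mul_add, Finset.mul_sum, mul_assoc]

theorem IsStat.const {n : ℕ} (c : Fin n → ℝ → ℝ) (a : ℝ) : IsStat c (fun _ => a) a :=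
  ⟨⟨a, 0, Fin.elim0, fun k => k.elim0, Fin.elim0, fun k => k.elim0⟩, by simp [Static.callPayoff],
    by simp [Static.price]⟩

theorem IsStat.call {n : ℕ} (c : Fin n → ℝ → ℝ) (i : Fin n) {K : ℝ} (hK : 0 ≤ K) :
    IsStat c (fun ω => max (ω i.succ - K) 0) (c i K) :=
  ⟨⟨0, 1, fun _ => 1, fun _ => i, fun _ => K, fun _ => hK⟩, by simp [Static.callPayoff],
    by simp [Static.price]⟩

theorem IsStat.sum {n : ℕ} {c : Fin n → ℝ → ℝ} {ι : Type*} (s : Finset ι)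
    {φ : ι → Path n → ℝ} {p : ι → ℝ} (h : ∀ i, IsStat c (φ i) (p i)) :
    IsStat c (fun ω => ∑ i ∈ s, φ i ω) (∑ i ∈ s, p i) := by
  induction s using Finset.induction_on with
  | empty => simpa using IsStat.const c 0
  | insert a s ha ih =>
    simp only [Finset.sum_insert ha]
    exact (h a).add ih

theorem IsGain.zero {n : ℕ} : IsGain (fun _ : Path n => (0 : ℝ)) :=
  ⟨⟨fun _ _ => 0, fun _ => measurable_const, fun _ => ⟨0, by simp⟩⟩, fun _ _ => le_rfl,
    by simp [Dyn.gains]⟩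

theorem IsGain.add {n : ℕ} {φ ψ : Path n → ℝ} (h : IsGain φ) (h' : IsGain ψ) :
    IsGain (fun ω => φ ω + ψ ω) := by
  obtain ⟨D, hD, hD'⟩ := h
  obtain ⟨E, hE, hE'⟩ := h'
  refine ⟨⟨fun j x => D.pos j x + E.pos j x, fun j => (D.meas j).add (E.meas j), fun j => ?_⟩,
    fun j x => add_nonneg (hD j x) (hE j x), fun ω => ?_⟩
  · obtain ⟨C, hC⟩ := D.bdd j
    obtain ⟨C', hC'⟩ := E.bdd j
    exact ⟨C + C', fun x => (abs_add_le _ _).trans (add_le_add (hC x) (hC' x))⟩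
  · change _ = φ ω + ψ ω
    rw [← hD', ← hE']
    simp only [Dyn.gains, ← Finset.sum_add_distrib, add_mul]

theorem IsGain.smul {n : ℕ} {φ : Path n → ℝ} (h : IsGain φ) {a : ℝ} (ha : 0 ≤ a) :
    IsGain (fun ω => a * φ ω) := by
  obtain ⟨D, hD, hD'⟩ := h
  refine ⟨⟨fun j x => a * D.pos j x, fun j => (D.meas j).const_mul a, fun j => ?_⟩,
    fun j x => mul_nonneg ha (hD j x), fun ω => ?_⟩
  · obtain ⟨C, hC⟩ := D.bdd j
    refine ⟨a * C, fun x => ?_⟩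
    rw [abs_mul, abs_of_nonneg ha]
    exact mul_le_mul_of_nonneg_left (hC x) ha
  · change _ = a * φ ω
    rw [← hD']
    simp only [Dyn.gains, Finset.mul_sum, mul_assoc]

theorem IsGain.single {n : ℕ} (j : Fin n) {g : (Fin j → ℝ) → ℝ} (hg : Measurable g)
    (hg0 : ∀ y, 0 ≤ g y) (hg1 : ∀ y, g y ≤ 1) :
    IsGain (fun ω : Path n => g (restr j ω) * (ω j.succ - ω j.castSucc)) := by
  refine ⟨⟨fun k x => if k = j then
      g (fun i : Fin j => if h : (i : ℕ) < (k : ℕ) then x ⟨i, h⟩ else 0) else 0,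
    fun k => ?_, fun k => ⟨1, fun x => ?_⟩⟩, fun k x => ?_, fun ω => ?_⟩
  · by_cases hk : k = j
    · simp only [hk, if_true]
      refine hg.comp (measurable_pi_iff.2 fun i => ?_)
      have := i.isLt
      simp only [this, dite_true]
      exact measurable_pi_apply _
    · simp only [hk, if_false]
      exact measurable_const
  · split_ifs
    · rw [abs_of_nonneg (hg0 _)]; exact hg1 _
    · simp
  · dsimp only
    split_ifs
    · exact hg0 _
    · exact le_rfl
  · simp only [Dyn.gains]
    rw [Finset.sum_eq_single j]
    · simp only [if_true, Fin.is_lt, dite_true]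
    · intro k _ hk
      simp [hk]
    · simp

/-- Every static call portfolio is a sum of functions of linear growth. -/
theorem IsStat.toLin {n : ℕ} {s₀ : ℝ} {μ : Fin n → Measure ℝ} [∀ i, IsProbabilityMeasure (μ i)]
    (hmom : ∀ i, Integrable (fun x => x) (μ i)) (X : Static n) :
    ∃ u : Fin (n + 1) → ℝ → ℝ, (∀ i, Measurable (u i)) ∧
      (∀ i, ∃ C : ℝ, ∀ x : ℝ, 0 ≤ x → |u i x| ≤ C * (1 + |x|)) ∧
      linGrowthCost s₀ μ u = X.price (fun i K' => ∫ x, max (x - K') 0 ∂(μ i)) ∧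
      ∀ ω, ∑ i : Fin (n + 1), u i (ω i) = X.callPayoff ω := by
  refine ⟨Fin.cons (fun _ => X.const) (fun i x => ∑ k, if X.idx k = i then
    X.coeff k * max (x - X.strike k) 0 else 0), ?_, ?_, ?_, ?_⟩
  · intro i
    refine Fin.cases ?_ (fun i => ?_) i
    · simp
    · simp only [Fin.cons_succ]
      refine Finset.measurable_sum _ fun k _ => ?_
      split_ifs
      · fun_prop
      · exact measurable_const
  · intro i
    refine Fin.cases ?_ (fun i => ?_) i
    · refine ⟨|X.const|, fun x _ => ?_⟩
      simp only [Fin.cons_zero]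
      nlinarith [abs_nonneg X.const, abs_nonneg x]
    · refine ⟨∑ k, |X.coeff k|, fun x hx => ?_⟩
      simp only [Fin.cons_succ]
      refine (Finset.abs_sum_le_sum_abs _ _).trans ?_
      rw [Finset.sum_mul]
      refine Finset.sum_le_sum fun k _ => ?_
      split_ifs
      · rw [abs_mul, abs_of_nonneg (a := max (x - X.strike k) 0) (le_max_right _ _)]
        refine mul_le_mul_of_nonneg_left (max_le ?_ (by positivity)) (abs_nonneg _)
        linarith [X.strike_nonneg k, le_abs_self x]
      · rw [abs_zero]; positivity
  · simp only [linGrowthCost, Fin.cons_zero, Fin.cons_succ, Static.price]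
    congr 1
    have : ∀ i, ∫ x, (∑ k, if X.idx k = i then X.coeff k * max (x - X.strike k) 0 else 0) ∂(μ i) =
        ∑ k, if X.idx k = i then X.coeff k * ∫ x, max (x - X.strike k) 0 ∂(μ i) else 0 := by
      intro i
      rw [integral_finsetSum]
      · refine Finset.sum_congr rfl fun k _ => ?_
        split_ifs
        · rw [integral_const_mul]
        · simp
      · intro k _
        split_ifs
        · exact (aux_call_integrable (hmom i) _).const_mul _
        · exact integrable_zero _ _ _
    simp_rw [this]
    rw [Finset.sum_comm]
    refine Finset.sum_congr rfl fun k _ => ?_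
    simp
  · intro ω
    rw [Fin.sum_univ_succ]
    simp only [Fin.cons_zero, Fin.cons_succ, Static.callPayoff]
    congr 1
    rw [Finset.sum_comm]
    refine Finset.sum_congr rfl fun k _ => ?_
    simp

/-! ### Weak duality -/

theorem measurable_restr {n : ℕ} (j : Fin n) : Measurable (restr j) :=
  measurable_pi_iff.2 fun _ => measurable_pi_apply _

theorem ae_of_measure_eq_one {α : Type*} [MeasurableSpace α] {Q : Measure α}
    [IsProbabilityMeasure Q] {s : Set α} (hs : MeasurableSet s) (h : Q s = 1) :
    ∀ᵐ ω ∂Q, ω ∈ s := by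
  rw [ae_iff]
  exact (prob_compl_eq_zero_iff hs).2 h

theorem isClosed_Omega (n : ℕ) (s₀ : ℝ) : IsClosed (Omega n s₀) := by
  have : Omega n s₀ = {ω | ω 0 = s₀} ∩ ⋂ i, {ω | 0 ≤ ω i} := by
    ext ω; simp [Omega]
  rw [this]
  exact (isClosed_eq (continuous_apply 0) continuous_const).inter
    (isClosed_iInter fun i => isClosed_le continuous_const (continuous_apply i))

theorem coord_integrable {n : ℕ} {s₀ : ℝ} {μ : Fin n → Measure ℝ}
    (hmom : ∀ i, Integrable (fun x => x) (μ i)) {Q : Measure (Path n)} (hQ : Q ∈ PiMu s₀ μ)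
    (i : Fin (n + 1)) : Integrable (fun ω => ω i) Q := by
  obtain ⟨hp, hO, hm⟩ := hQ
  refine Fin.cases ?_ (fun i => ?_) i
  · refine (integrable_const s₀).congr ?_
    filter_upwards [ae_of_measure_eq_one (isClosed_Omega n s₀).measurableSet hO] with ω hω
    exact hω.1.symm
  · have := hmom i
    rw [← hm i] at this
    exact this.comp_measurable (measurable_pi_apply _)

theorem gains_integral {n : ℕ} {s₀ : ℝ} {μ : Fin n → Measure ℝ}
    (hmom : ∀ i, Integrable (fun x => x) (μ i)) {Q : Measure (Path n)} (hQ : Q ∈ MSet s₀ μ)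
    (D : Dyn n) (hD : D.Nonneg ∨ ∀ i, ∫ x, x ∂(μ i) = s₀) :
    Integrable D.gains Q ∧ ∫ ω, D.gains ω ∂Q ≤ 0 := by
  have hc := coord_integrable hmom hQ.1
  have hQ1 := hQ.1
  obtain ⟨⟨hp, hO, hm⟩, hS⟩ := hQ
  have hZ : ∀ j : Fin n, Integrable (fun ω : Path n => ω j.succ - ω j.castSucc) Q :=
    fun j => (hc _).sub (hc _)
  have hI : ∀ j : Fin n, Integrable (fun ω : Path n =>
      D.pos j (restr j ω) * (ω j.succ - ω j.castSucc)) Q := by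
    intro j
    obtain ⟨C, hC⟩ := D.bdd j
    refine (hZ j).bdd_mul (c := C) ((D.meas j).comp (measurable_restr j)).aestronglyMeasurable ?_
    filter_upwards with ω using hC _
  refine ⟨integrable_finsetSum _ fun j _ => hI j, ?_⟩
  simp only [Dyn.gains]
  rw [integral_finsetSum _ fun j _ => hI j]
  refine Finset.sum_nonpos fun j _ => ?_
  obtain ⟨C, hC⟩ := D.bdd j
  rcases hD with hD | hE
  · exact aux_gain_nonpos Q (measurable_restr j) (hZ j) (hS j) (D.meas j) (hD j)
      (fun y => (le_abs_self _).trans (hC y))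
  · have mean : ∀ i : Fin (n + 1), ∫ ω : Path n, ω i ∂Q = s₀ := by
      intro i
      refine Fin.cases ?_ (fun i => ?_) i
      · rw [integral_congr_ae (g := fun _ => s₀)]
        · simp
        · filter_upwards [ae_of_measure_eq_one (isClosed_Omega n s₀).measurableSet hO] with ω hω
          exact hω.1
      · have hmeas : Measurable (fun ω : Path n => ω i.succ) := measurable_pi_apply _
        rw [← hE i, ← hm i]
        exact (integral_map hmeas.aemeasurable (f := fun x : ℝ => x)
          measurable_id.aestronglyMeasurable).symm
    have mZ : ∫ ω : Path n, (ω j.succ - ω j.castSucc) ∂Q = 0 := by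
      rw [integral_sub (hc _) (hc _), mean, mean, sub_self]
    have hC0 : 0 ≤ C := (abs_nonneg _).trans (hC (fun _ => 0))
    have h1 := aux_gain_nonpos Q (measurable_restr j) (hZ j) (hS j)
      (g := fun y => D.pos j y + C) ((D.meas j).add_const C)
      (fun y => by linarith [(abs_le.1 (hC y)).1]) (C := C + C)
      (fun y => by linarith [(abs_le.1 (hC y)).2])
    have e : ∫ ω : Path n, (D.pos j (restr j ω) + C) * (ω j.succ - ω j.castSucc) ∂Q =
        ∫ ω : Path n, D.pos j (restr j ω) * (ω j.succ - ω j.castSucc) ∂Q := by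
      simp_rw [add_mul]
      rw [integral_add (hI j) ((hZ j).const_mul C), integral_const_mul, mZ]
      simp
    simpa only [e] using h1

theorem posE_mono {x y : EReal} (h : x ≤ y) : posE x ≤ posE y := by
  unfold posE
  split_ifs with h1 h2 h2
  · exact le_rfl
  · subst h1
    exact absurd (top_le_iff.1 h) h2
  · exact le_top
  · refine ENNReal.ofReal_le_ofReal_iff'.2 ?_
    rcases eq_or_ne x ⊥ with rfl | hx
    · right; simp
    · left; exact EReal.toReal_le_toReal h hx h2

theorem posE_coe (x : ℝ) : posE (x : EReal) = ENNReal.ofReal x := by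
  simp [posE]

theorem eexpE_mono {n : ℕ} {Q : Measure (Path n)} {f g : Path n → EReal}
    (h : ∀ᵐ ω ∂Q, f ω ≤ g ω) : eexpE Q f ≤ eexpE Q g := by
  unfold eexpE
  refine EReal.sub_le_sub ?_ ?_
  · refine EReal.coe_ennreal_le_coe_ennreal_iff.2 (lintegral_mono_ae ?_)
    filter_upwards [h] with ω hω using posE_mono hω
  · refine EReal.coe_ennreal_le_coe_ennreal_iff.2 (lintegral_mono_ae ?_)
    filter_upwards [h] with ω hω using posE_mono (EReal.neg_le_neg_iff.2 hω)

theorem eexpE_coe {n : ℕ} {Q : Measure (Path n)} {f : Path n → ℝ} (hf : Integrable f Q) :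
    eexpE Q (fun ω => (f ω : EReal)) = ((∫ ω, f ω ∂Q : ℝ) : EReal) := by
  unfold eexpE
  simp only [← EReal.coe_neg, posE_coe]
  rw [integral_eq_lintegral_pos_part_sub_lintegral_neg_part hf, EReal.coe_sub,
    EReal.coe_ennreal_toReal, EReal.coe_ennreal_toReal]
  · exact hf.neg.lintegral_lt_top.ne
  · exact hf.lintegral_lt_top.ne

theorem weak_duality {n : ℕ} {s₀ : ℝ} {P : Set (Path n)} (hPclosed : IsClosed P)
    {μ : Fin n → Measure ℝ} [∀ i, IsProbabilityMeasure (μ i)] (hsupp : ∀ i, μ i (Set.Iio 0) = 0)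
    (hmom : ∀ i, Integrable (fun x => x) (μ i)) {Q : Measure (Path n)} (hQ : Q ∈ MSetP s₀ μ P)
    (G : Path n → EReal) (u : Fin (n + 1) → ℝ → ℝ) (D : Dyn n)
    (hu : ∀ i, Measurable (u i)) (hu' : ∀ i, ∃ C : ℝ, ∀ x : ℝ, 0 ≤ x → |u i x| ≤ C * (1 + |x|))
    (hD : D.Nonneg ∨ ∀ i, ∫ x, x ∂(μ i) = s₀)
    (h : ∀ ω ∈ P, G ω ≤ ((∑ i : Fin (n + 1), u i (ω i) + D.gains ω : ℝ) : EReal)) :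
    eexpE Q G ≤ (linGrowthCost s₀ μ u : EReal) := by
  obtain ⟨hQM, hQP⟩ := hQ
  obtain ⟨gi, g0⟩ := gains_integral hmom hQM D hD
  obtain ⟨⟨hp, hO, hm⟩, hS⟩ := hQM
  have hui : ∀ i, Integrable (u (Fin.succ i)) (μ i) := by
    intro i
    obtain ⟨C, hC⟩ := hu' i.succ
    refine (((integrable_const (1 : ℝ)).add (hmom i).abs).const_mul C).mono'
      (hu _).aestronglyMeasurable ?_
    have : ∀ᵐ x ∂(μ i), x ∉ Iio (0 : ℝ) := measure_eq_zero_iff_ae_notMem.1 (hsupp i)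
    filter_upwards [this] with x hx
    exact hC x (by simpa using hx)
  have hci : ∀ i, Integrable (fun ω : Path n => u i (ω i)) Q ∧
      ∫ ω : Path n, u i (ω i) ∂Q = (Fin.cons (u 0 s₀) (fun i => ∫ x, u i.succ x ∂(μ i)) : Fin (n + 1) → ℝ) i := by
    intro i
    refine Fin.cases ?_ (fun i => ?_) i
    · have : (fun ω : Path n => u 0 (ω 0)) =ᵐ[Q] fun _ => u 0 s₀ := by
        filter_upwards [ae_of_measure_eq_one (isClosed_Omega n s₀).measurableSet hO] with ω hω
        rw [hω.1]
      refine ⟨(integrable_const _).congr this.symm, ?_⟩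
      rw [integral_congr_ae this]
      simp
    · have h1 := hui i
      rw [← hm i] at h1
      refine ⟨h1.comp_measurable (measurable_pi_apply _), ?_⟩
      rw [Fin.cons_succ, ← hm i, integral_map (measurable_pi_apply _).aemeasurable
        (hu _).aestronglyMeasurable]
  have hsum : Integrable (fun ω : Path n => ∑ i : Fin (n + 1), u i (ω i)) Q :=
    integrable_finsetSum _ fun i _ => (hci i).1
  have hle : eexpE Q G ≤ eexpE Q (fun ω =>
      ((∑ i : Fin (n + 1), u i (ω i) + D.gains ω : ℝ) : EReal)) := by
    refine eexpE_mono ?_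
    filter_upwards [ae_of_measure_eq_one hPclosed.measurableSet hQP] with ω hω using h ω hω
  refine hle.trans ?_
  rw [eexpE_coe (f := fun ω => ∑ i : Fin (n + 1), u i (ω i) + D.gains ω) (hsum.add gi), EReal.coe_le_coe_iff, integral_add hsum gi,
    integral_finsetSum _ fun i _ => (hci i).1, Finset.sum_congr rfl fun i _ => (hci i).2,
    Fin.sum_univ_succ]
  simp only [Fin.cons_zero, Fin.cons_succ, linGrowthCost]
  linarith


/-! ### The functional obtained from the Riesz extension theorem -/

/-- The weight function of linear growth. -/
def wt {n : ℕ} (ω : Path n) : ℝ := 1 + ∑ i, |ω i|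

theorem one_le_wt {n : ℕ} (ω : Path n) : 1 ≤ wt ω := by
  have : 0 ≤ ∑ i, |ω i| := Finset.sum_nonneg fun i _ => abs_nonneg _
  unfold wt; linarith

/-- Functions of linear growth on the path space. -/
def LG (n : ℕ) : Submodule ℝ (Path n → ℝ) where
  carrier := {f | ∃ C, ∀ ω, |f ω| ≤ C * wt ω}
  zero_mem' := ⟨0, fun ω => by simp⟩
  add_mem' := by
    rintro f g ⟨C, hC⟩ ⟨C', hC'⟩
    refine ⟨C + C', fun ω => ?_⟩
    have := abs_add_le (f ω) (g ω)
    simp only [Pi.add_apply]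
    linarith [hC ω, hC' ω]
  smul_mem' := by
    rintro a f ⟨C, hC⟩
    refine ⟨|a| * C, fun ω => ?_⟩
    simp only [Pi.smul_apply, smul_eq_mul, abs_mul, mul_assoc]
    exact mul_le_mul_of_nonneg_left (hC ω) (abs_nonneg a)

/-- `t g ≤ a` for `t ≥ 0` and `g < ⊤`. -/
def Hedge (t : ℝ) (g : EReal) (a : ℝ) : Prop :=
  (t = 0 → 0 ≤ a) ∧ (g ≠ ⊥ → t * g.toReal ≤ a)

theorem Hedge.add {t t' a a' : ℝ} {g : EReal} (ht : 0 ≤ t) (ht' : 0 ≤ t') (h : Hedge t g a)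
    (h' : Hedge t' g a') : Hedge (t + t') g (a + a') := by
  refine ⟨fun h0 => ?_, fun hg => ?_⟩
  · exact add_nonneg (h.1 (by linarith)) (h'.1 (by linarith))
  · have h1 := h.2 hg
    have h2 := h'.2 hg
    rw [add_mul]
    exact add_le_add h1 h2

theorem Hedge.smul {t a : ℝ} {g : EReal} (h : Hedge t g a) {c : ℝ} (hc : 0 < c) :
    Hedge (c * t) g (c * a) := by
  refine ⟨fun h0 => ?_, fun hg => ?_⟩
  · rcases mul_eq_zero.1 h0 with h1 | h1
    · linarith
    · exact mul_nonneg hc.le (h.1 h1)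
  · have := mul_le_mul_of_nonneg_left (h.2 hg) hc.le
    linarith

theorem hedge_price {n : ℕ} {s₀ : ℝ} {P : Set (Path n)} (hPclosed : IsClosed P)
    {μ : Fin n → Measure ℝ} [∀ i, IsProbabilityMeasure (μ i)] (hsupp : ∀ i, μ i (Set.Iio 0) = 0)
    (hmom : ∀ i, Integrable (fun x => x) (μ i)) (hne : (MSetP s₀ μ P).Nonempty)
    (G : Path n → EReal) (hGtop : ∀ ω, G ω ≠ ⊤) {v : ℝ}
    (hv : (v : EReal) < V Static.callPayoff (fun i K' => ∫ x, max (x - K') 0 ∂(μ i)) P G)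
    {φ ψ : Path n → ℝ} {p t : ℝ} (hφ : IsStat (fun i K' => ∫ x, max (x - K') 0 ∂(μ i)) φ p)
    (hψ : IsGain ψ) (ht : 0 ≤ t) (h : ∀ ω ∈ P, Hedge t (G ω) (φ ω + ψ ω)) : t * v ≤ p := by
  rcases ht.eq_or_lt with rfl | ht
  · obtain ⟨Q, hQ⟩ := hne
    obtain ⟨X, hX, rfl⟩ := hφ
    obtain ⟨D, hD, hDψ⟩ := hψ
    obtain ⟨u, hu1, hu2, hu3, hu4⟩ := IsStat.toLin (s₀ := s₀) hmom X
    have := weak_duality hPclosed hsupp hmom hQ (fun _ => ((0 : ℝ) : EReal)) u D hu1 hu2 (Or.inl hD) (by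
      intro ω hω
      rw [EReal.coe_le_coe_iff, hu4, hX, hDψ]
      exact (h ω hω).1 rfl)
    have hp : IsProbabilityMeasure Q := hQ.1.1.1
    rw [hu3, eexpE_coe (f := fun _ => (0 : ℝ)) (integrable_zero _ _ _), EReal.coe_le_coe_iff] at this
    simpa using this
  · obtain ⟨X, hX, hXp⟩ := hφ.smul t⁻¹
    obtain ⟨D, hD, hDψ⟩ := hψ.smul (inv_nonneg.2 ht.le)
    have hle : V Static.callPayoff (fun i K' => ∫ x, max (x - K') 0 ∂(μ i)) P G ≤
        ((t⁻¹ * p : ℝ) : EReal) := by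
      refine sInf_le ⟨X, D, hD, by rw [hXp], fun ω hω => ?_⟩
      rw [hX, hDψ]
      by_cases hb : G ω = ⊥
      · rw [hb]; exact bot_le
      · rw [← EReal.coe_toReal (hGtop ω) hb, EReal.coe_le_coe_iff]
        have h1 := (h ω hω).2 hb
        rw [← mul_add, ← div_eq_inv_mul, le_div_iff₀ ht]
        linarith
    have h2 := EReal.coe_lt_coe_iff.1 (hv.trans_le hle)
    rw [← div_eq_inv_mul, lt_div_iff₀ ht] at h2
    linarith

theorem exists_functional {n : ℕ} {s₀ : ℝ} (hs₀ : 0 < s₀) {P : Set (Path n)}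
    (hPsub : P ⊆ Omega n s₀) (hPclosed : IsClosed P)
    {μ : Fin n → Measure ℝ} [∀ i, IsProbabilityMeasure (μ i)] (hsupp : ∀ i, μ i (Set.Iio 0) = 0)
    (hmom : ∀ i, Integrable (fun x => x) (μ i)) (hne : (MSetP s₀ μ P).Nonempty)
    (G : Path n → EReal) (hGtop : ∀ ω, G ω ≠ ⊤) {v : ℝ}
    (hv : (v : EReal) < V Static.callPayoff (fun i K' => ∫ x, max (x - K') 0 ∂(μ i)) P G) :
    ∃ L : LG n →ₗ[ℝ] ℝ,
      (∀ f : LG n, (∀ ω ∈ P, 0 ≤ f.1 ω) → 0 ≤ L f) ∧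
      (∀ f : LG n, (∀ ω ∈ P, f.1 ω = 1) → L f = 1) ∧
      (∀ (i : Fin n) (K : ℝ), 0 ≤ K → ∀ f : LG n, (∀ ω ∈ P, f.1 ω = max (ω i.succ - K) 0) →
        L f = ∫ x, max (x - K) 0 ∂(μ i)) ∧
      (∀ (ψ : Path n → ℝ), IsGain ψ → ∀ f : LG n, (∀ ω ∈ P, f.1 ω = ψ ω) → L f ≤ 0) ∧
      (∀ f : LG n, (∀ ω ∈ P, G ω ≤ (f.1 ω : EReal)) → v ≤ L f) := by
  set c : Fin n → ℝ → ℝ := fun i K' => ∫ x, max (x - K') 0 ∂(μ i) with hc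
  let S : PointedCone ℝ (LG n) :=
    { carrier := {f | ∃ (φ ψ : Path n → ℝ) (p t : ℝ), IsStat c φ p ∧ IsGain ψ ∧ 0 ≤ t ∧
        p ≤ t * v ∧ ∀ ω ∈ P, Hedge t (G ω) (f.1 ω + φ ω + ψ ω)}
      zero_mem' := ⟨fun _ => 0, fun _ => 0, 0, 0, IsStat.const c 0, IsGain.zero, le_rfl, by simp,
        fun ω _ => by simp [Hedge]⟩
      add_mem' := by
        rintro f f' ⟨φ, ψ, p, t, h1, h2, h3, h4, h5⟩ ⟨φ', ψ', p', t', h1', h2', h3', h4', h5'⟩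
        refine ⟨_, _, _, t + t', h1.add h1', h2.add h2', add_nonneg h3 h3', by linarith,
          fun ω hω => ?_⟩
        convert (h5 ω hω).add h3 h3' (h5' ω hω) using 1
        simp only [Submodule.coe_add, Pi.add_apply]
        ring
      smul_mem' := by
        rintro ⟨a, ha⟩ f ⟨φ, ψ, p, t, h1, h2, h3, h4, h5⟩
        rcases ha.eq_or_lt with rfl | ha'
        · refine ⟨fun _ => 0, fun _ => 0, 0, 0, IsStat.const c 0, IsGain.zero, le_rfl, by simp,
            fun ω _ => ?_⟩
          have : ((⟨0, ha⟩ : {a : ℝ // 0 ≤ a}) • f).1 ω = 0 * f.1 ω := rfl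
          rw [this]
          simp [Hedge]
        · refine ⟨_, _, _, a * t, h1.smul a, h2.smul ha, mul_nonneg ha h3, ?_, fun ω hω => ?_⟩
          · have := mul_le_mul_of_nonneg_left h4 ha
            linarith
          · convert (h5 ω hω).smul ha' using 1
            have : ((⟨a, ha⟩ : {a : ℝ // 0 ≤ a}) • f).1 ω = a * f.1 ω := rfl
            rw [this]
            ring }
  have hS : ∀ f : LG n, f ∈ S ↔ ∃ (φ ψ : Path n → ℝ) (p t : ℝ), IsStat c φ p ∧ IsGain ψ ∧ 0 ≤ t ∧
        p ≤ t * v ∧ ∀ ω ∈ P, Hedge t (G ω) (f.1 ω + φ ω + ψ ω) := fun f => Iff.rfl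
  have one_mem : (fun _ => (1 : ℝ)) ∈ LG n := ⟨1, fun ω => by simpa using one_le_wt ω⟩
  let e : LG n := ⟨fun _ => 1, one_mem⟩
  have he : e ≠ 0 := by
    intro h
    have := congrFun (congrArg Subtype.val h) (fun _ => 0)
    simp [e] at this
  let f₀ : LG n →ₗ.[ℝ] ℝ := LinearPMap.mkSpanSingleton e (1 : ℝ) he
  have hf₀ : ∀ x : f₀.domain, ∃ a : ℝ, (x : LG n) = a • e ∧ f₀ x = a := by
    rintro ⟨x, hx⟩
    obtain ⟨a, rfl⟩ := Submodule.mem_span_singleton.1 hx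
    refine ⟨a, rfl, ?_⟩
    have := LinearPMap.mkSpanSingleton'_apply e (1 : ℝ)
      (fun c hc => by rw [(smul_eq_zero.1 hc).resolve_right he, RingHom.map_zero, zero_smul]) a hx
    refine Eq.trans this ?_
    simp
  have hdom : ∀ a : ℝ, a • e ∈ f₀.domain := fun a => Submodule.mem_span_singleton.2 ⟨a, rfl⟩
  obtain ⟨L, hL, hLS⟩ := riesz_extension S f₀ (by
    intro x hx
    obtain ⟨a, hxa, ha⟩ := hf₀ x
    rw [ha]
    rw [hS, hxa] at hx
    obtain ⟨φ, ψ, p, t, h1, h2, h3, h4, h5⟩ := hx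
    have := hedge_price hPclosed hsupp hmom hne G hGtop hv
      ((IsStat.const c a).add h1) h2 h3 (by
        intro ω hω
        have := h5 ω hω
        simpa [e] using this)
    linarith) (by
    intro y
    obtain ⟨C, hC⟩ := y.2
    refine ⟨⟨(|C| * (1 + s₀) + |C| * ∑ i, c i 0) • e, hdom _⟩, ?_⟩
    rw [hS]
    refine ⟨_, _, _, 0, ((IsStat.sum Finset.univ
      (fun i => IsStat.call c i le_rfl)).smul |C|).add (IsStat.const c (-(|C| * ∑ i, c i 0))),
      IsGain.zero, le_rfl, by simp, fun ω hω => ?_⟩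
    have hO := hPsub hω
    have h1 : |C| * wt ω = |C| * (1 + s₀) + |C| * ∑ i : Fin n, max (ω i.succ - 0) 0 := by
      have : ∀ i : Fin n, max (ω i.succ - 0) 0 = |ω i.succ| := fun i => by
        rw [sub_zero, max_eq_left (hO.2 _), abs_of_nonneg (hO.2 _)]
      simp_rw [this]
      rw [wt, Fin.sum_univ_succ, hO.1, abs_of_pos hs₀]
      ring
    have h2 : -(|C| * wt ω) ≤ y.1 ω := by
      have := (abs_le.1 (hC ω)).1
      have h3 := mul_le_mul_of_nonneg_right (le_abs_self C) (zero_le_one.trans (one_le_wt ω))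
      linarith
    have h3 : 0 ≤ (((|C| * (1 + s₀) + |C| * ∑ i, c i 0) • e + y : LG n) : Path n → ℝ) ω +
        (|C| * ∑ i : Fin n, max (ω i.succ - 0) 0 + -(|C| * ∑ i, c i 0)) + 0 := by
      have : (((|C| * (1 + s₀) + |C| * ∑ i, c i 0) • e + y : LG n) : Path n → ℝ) ω =
        (|C| * (1 + s₀) + |C| * ∑ i, c i 0) * 1 + y.1 ω := rfl
      rw [this]
      linarith
    exact ⟨fun _ => h3, fun _ => by rw [zero_mul]; exact h3⟩)
  have hLe : L e = 1 := by
    have h1 := hL ⟨(1 : ℝ) • e, hdom 1⟩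
    obtain ⟨a, h2, h3⟩ := hf₀ ⟨(1 : ℝ) • e, hdom 1⟩
    have h4 : a = 1 := by
      have := congrFun (congrArg Subtype.val h2) (fun _ => 0)
      simpa [e] using this.symm
    rw [h3, h4] at h1
    simpa using h1
  have hpos : ∀ f : LG n, (∀ ω ∈ P, 0 ≤ f.1 ω) → 0 ≤ L f := by
    intro f hf
    refine hLS f ((hS f).2 ⟨fun _ => 0, fun _ => 0, 0, 0, IsStat.const c 0, IsGain.zero, le_rfl,
      by simp, fun ω hω => ?_⟩)
    have := hf ω hω
    simp [Hedge, this]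
  have hcong : ∀ f g : LG n, (∀ ω ∈ P, f.1 ω = g.1 ω) → L f = L g := by
    intro f g h
    have h1 := hpos (f - g) (fun ω hω => by simp [h ω hω])
    have h2 := hpos (g - f) (fun ω hω => by simp [h ω hω])
    rw [map_sub] at h1 h2
    linarith
  refine ⟨L, hpos, ?_, ?_, ?_, ?_⟩
  · intro f hf
    rw [← hLe]
    exact hcong f e hf
  · intro i K hK f hf
    have key : ∀ a : ℝ, 0 ≤ L (a • f - (a * c i K) • e) := by
      intro a
      refine hLS _ ((hS _).2 ⟨_, fun _ => 0, _, 0, ((IsStat.call c i hK).smul (-a)).add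
        (IsStat.const c (a * c i K)), IsGain.zero, le_rfl, by simp, fun ω hω => ?_⟩)
      have h1 : ((a • f - (a * c i K) • e : LG n) : Path n → ℝ) ω +
          (-a * max (ω i.succ - K) 0 + a * c i K) + 0 = 0 := by
        have : ((a • f - (a * c i K) • e : LG n) : Path n → ℝ) ω = a * f.1 ω - a * c i K * 1 := rfl
        rw [this, hf ω hω]; ring
      exact ⟨fun _ => h1.ge, fun _ => by rw [zero_mul]; exact h1.ge⟩
    have h1 := key 1
    have h2 := key (-1)
    simp only [map_sub, map_smul, hLe, smul_eq_mul] at h1 h2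
    change L f = c i K
    linarith
  · intro ψ hψ f hf
    have : 0 ≤ L (-f) := by
      refine hLS _ ((hS _).2 ⟨fun _ => 0, ψ, 0, 0, IsStat.const c 0, hψ, le_rfl, by simp,
        fun ω hω => ?_⟩)
      have := hf ω hω
      simp [Hedge, this]
    rw [map_neg] at this
    linarith
  · intro f hf
    have : 0 ≤ L (f - v • e) := by
      refine hLS _ ((hS _).2 ⟨fun _ => v, fun _ => 0, v, 1, IsStat.const c v, IsGain.zero,
        zero_le_one, by simp, fun ω hω => ?_⟩)
      have h1 : ((f - v • e : LG n) : Path n → ℝ) ω = f.1 ω - v * 1 := rfl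
      rw [h1]
      refine ⟨by simp, fun hb => ?_⟩
      have h2 := hf ω hω
      rw [← EReal.coe_toReal (hGtop ω) hb, EReal.coe_le_coe_iff] at h2
      linarith
    rw [map_sub, map_smul, hLe, smul_eq_mul] at this
    linarith



/-! ### The measure representing the functional -/

/-- Continuous cutoff function. -/
def cut {n : ℕ} (R : ℕ) (ω : Path n) : ℝ := max 0 (min 1 (2 * (R : ℝ) + 1 - ‖ω‖))

theorem cut_cont {n : ℕ} (R : ℕ) : Continuous (cut (n := n) R) := by
  unfold cut; fun_prop

theorem cut_nonneg {n : ℕ} (R : ℕ) (ω : Path n) : 0 ≤ cut R ω := le_max_left _ _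

theorem cut_le_one {n : ℕ} (R : ℕ) (ω : Path n) : cut R ω ≤ 1 :=
  max_le zero_le_one (min_le_left _ _)

theorem cut_eq_one {n : ℕ} {R : ℕ} {ω : Path n} (h : ‖ω‖ ≤ 2 * R) : cut R ω = 1 := by
  unfold cut
  rw [min_eq_left (by linarith), max_eq_right zero_le_one]

theorem cut_eq_zero {n : ℕ} {R : ℕ} {ω : Path n} (h : 2 * (R : ℝ) + 1 < ‖ω‖) : cut R ω = 0 := by
  unfold cut
  exact max_eq_left ((min_le_right _ _).trans (by linarith))

theorem cut_mono {n : ℕ} (ω : Path n) : Monotone (fun R : ℕ => cut R ω) := by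
  intro R R' h
  have : (R : ℝ) ≤ R' := by exact_mod_cast h
  unfold cut
  exact max_le_max le_rfl (min_le_min le_rfl (by linarith))

theorem cut_tendsto {n : ℕ} (ω : Path n) : Tendsto (fun R : ℕ => cut R ω) atTop (𝓝 1) := by
  obtain ⟨N, hN⟩ := exists_nat_ge ‖ω‖
  refine tendsto_const_nhds.congr' ?_
  filter_upwards [eventually_ge_atTop N] with R hR
  have : (N : ℝ) ≤ R := by exact_mod_cast hR
  exact (cut_eq_one (by linarith [norm_nonneg ω])).symm

theorem wt_cont {n : ℕ} : Continuous (wt (n := n)) := by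
  unfold wt; fun_prop

theorem wt_pos {n : ℕ} (ω : Path n) : 0 ≤ wt ω := zero_le_one.trans (one_le_wt ω)

theorem LG_bound {n : ℕ} (f : LG n) : ∃ C, 0 ≤ C ∧ ∀ ω, |f.1 ω| ≤ C * wt ω := by
  obtain ⟨C, hC⟩ := f.2
  refine ⟨|C|, abs_nonneg C, fun ω => (hC ω).trans ?_⟩
  exact mul_le_mul_of_nonneg_right (le_abs_self C) (wt_pos ω)

/-- The truncation of a function of linear growth. -/
def trunc {n : ℕ} (R : ℕ) (f : LG n) : LG n :=
  ⟨fun ω => f.1 ω * cut R ω, by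
    obtain ⟨C, hC0, hC⟩ := LG_bound f
    refine ⟨C, fun ω => ?_⟩
    rw [abs_mul, abs_of_nonneg (cut_nonneg R ω)]
    exact (mul_le_of_le_one_right (abs_nonneg _) (cut_le_one R ω)).trans (hC ω)⟩

/-- The weight as an element of the space. -/
def wtLG (n : ℕ) : LG n := ⟨wt, 1, fun ω => by rw [one_mul, abs_of_nonneg (wt_pos ω)]⟩

theorem coord_mem {n : ℕ} (i : Fin (n + 1)) (ω : Path n) : |ω i| ≤ wt ω := by
  have := Finset.single_le_sum (f := fun i => |ω i|) (fun i _ => abs_nonneg _) (Finset.mem_univ i)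
  unfold wt
  linarith

/-- A call option as an element of the space. -/
def callLG {n : ℕ} (i : Fin n) (K : ℝ) : LG n := ⟨fun ω => max (ω i.succ - K) 0, 1 + |K|, fun ω => by
  have h1 := coord_mem i.succ ω
  have h2 := one_le_wt ω
  have h3 := abs_nonneg K
  have h4 := neg_abs_le K
  have h5 := le_abs_self (ω i.succ)
  rw [abs_of_nonneg (le_max_right _ _)]
  refine max_le ?_ ?_
  · nlinarith
  · nlinarith⟩

theorem tail_bound {n : ℕ} {s₀ : ℝ} {ω : Path n} (hω : ω ∈ Omega n s₀) {R : ℕ} (hR : 1 ≤ R)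
    (hR' : s₀ ≤ R) :
    wt ω * (1 - cut R ω) ≤ ((n : ℝ) + 3) * ∑ i : Fin n, max (ω i.succ - R) 0 := by
  have hw : 0 ≤ ∑ i : Fin n, max (ω i.succ - R) 0 :=
    Finset.sum_nonneg fun i _ => le_max_right _ _
  have hR1 : (1 : ℝ) ≤ R := by exact_mod_cast hR
  by_cases h : ‖ω‖ ≤ 2 * R
  · rw [cut_eq_one h, sub_self, mul_zero]
    positivity
  · have h1 : (R : ℝ) ≤ ∑ i : Fin n, max (ω i.succ - R) 0 := by
      by_contra hc
      apply h
      rw [pi_norm_le_iff_of_nonneg (by positivity)]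
      intro i
      rw [Real.norm_eq_abs, abs_of_nonneg (hω.2 i)]
      refine Fin.cases ?_ (fun i => ?_) i
      · rw [hω.1]; linarith
      · have := Finset.single_le_sum (f := fun i : Fin n => max (ω i.succ - R) 0)
          (fun i _ => le_max_right _ _) (Finset.mem_univ i)
        have h2 := le_max_left (ω i.succ - R) 0
        linarith
    have h2 : wt ω ≤ 1 + R + (∑ i : Fin n, max (ω i.succ - R) 0 + n * R) := by
      have : ∑ i : Fin n, |ω i.succ| ≤ ∑ i : Fin n, (max (ω i.succ - R) 0 + R) := by
        refine Finset.sum_le_sum fun i _ => ?_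
        rw [abs_of_nonneg (hω.2 _)]
        linarith [le_max_left (ω i.succ - R) 0]
      rw [Finset.sum_add_distrib] at this
      simp only [Finset.sum_const, Finset.card_univ, Fintype.card_fin, nsmul_eq_mul] at this
      rw [wt, Fin.sum_univ_succ, abs_of_nonneg (hω.2 0), hω.1]
      linarith
    have h3 : wt ω * (1 - cut R ω) ≤ wt ω :=
      mul_le_of_le_one_right (wt_pos ω) (by linarith [cut_nonneg R ω])
    have h4 : (n : ℝ) * R ≤ n * ∑ i : Fin n, max (ω i.succ - R) 0 :=
      mul_le_mul_of_nonneg_left h1 (Nat.cast_nonneg n)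
    linarith

open CompactlySupported in
/-- Compactly supported functions have linear growth. -/
def ccLG (n : ℕ) : C_c(Path n, ℝ) →ₗ[ℝ] LG n where
  toFun g := ⟨g, by
    obtain ⟨C, hC⟩ := g.hasCompactSupport.exists_bound_of_continuous g.continuous
    refine ⟨C, fun ω => (hC ω).trans ?_⟩
    exact le_mul_of_one_le_right ((norm_nonneg _).trans (hC ω)) (one_le_wt ω)⟩
  map_add' _ _ := rfl
  map_smul' _ _ := rfl

theorem exists_measure {n : ℕ} {s₀ : ℝ} {P : Set (Path n)}
    (hPsub : P ⊆ Omega n s₀) {μ : Fin n → Measure ℝ} [∀ i, IsProbabilityMeasure (μ i)]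
    (hmom : ∀ i, Integrable (fun x => x) (μ i)) (L : LG n →ₗ[ℝ] ℝ)
    (hpos : ∀ f : LG n, (∀ ω ∈ P, 0 ≤ f.1 ω) → 0 ≤ L f)
    (hcall : ∀ (i : Fin n) (K : ℝ), 0 ≤ K → ∀ f : LG n,
      (∀ ω ∈ P, f.1 ω = max (ω i.succ - K) 0) → L f = ∫ x, max (x - K) 0 ∂(μ i)) :
    ∃ Q : Measure (Path n), ∀ f : LG n, Continuous f.1 →
      Integrable f.1 Q ∧ ∫ ω, f.1 ω ∂Q = L f := by
  let Λ : CompactlySupportedContinuousMap (Path n) ℝ →ₚ[ℝ] ℝ :=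
    PositiveLinearMap.mk₀ (L ∘ₗ ccLG n) (fun g hg => hpos _ (fun ω _ => hg ω))
  have hmono : ∀ f g : LG n, (∀ ω ∈ P, f.1 ω ≤ g.1 ω) → L f ≤ L g := by
    intro f g h
    have := hpos (g - f) (fun ω hω => sub_nonneg.2 (h ω hω))
    rw [map_sub] at this
    linarith
  have hcs : ∀ (R : ℕ) (f : LG n), HasCompactSupport (trunc R f).1 := by
    intro R f
    refine HasCompactSupport.intro (isCompact_closedBall (0 : Path n) (2 * R + 1)) ?_
    intro ω hω
    have : cut R ω = 0 := cut_eq_zero (by simpa using hω)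
    change f.1 ω * cut R ω = 0
    rw [this, mul_zero]
  have hct : ∀ (R : ℕ) (f : LG n), Continuous f.1 → Continuous (trunc R f).1 :=
    fun R f hf => hf.mul (cut_cont R)
  let Q := RealRMK.rieszMeasure Λ
  have hint : ∀ (R : ℕ) (f : LG n), Continuous f.1 → Integrable (trunc R f).1 Q ∧
      ∫ ω, (trunc R f).1 ω ∂Q = L (trunc R f) := by
    intro R f hf
    refine ⟨(hct R f hf).integrable_of_hasCompactSupport (hcs R f), ?_⟩
    exact RealRMK.integral_rieszMeasure Λ ⟨⟨(trunc R f).1, hct R f hf⟩, hcs R f⟩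
  have hlim : ∀ f : LG n, Tendsto (fun R : ℕ => L (trunc R f)) atTop (𝓝 (L f)) := by
    intro f
    obtain ⟨C, hC0, hC⟩ := LG_bound f
    have htail : Tendsto (fun R : ℕ => C * (((n : ℝ) + 3) *
        ∑ i : Fin n, ∫ x, max (x - R) 0 ∂(μ i))) atTop (𝓝 0) := by
      have := tendsto_finsetSum (Finset.univ : Finset (Fin n))
        (fun i _ => aux_call_tendsto (hmom i))
      have h2 := (this.const_mul ((n : ℝ) + 3)).const_mul C
      simpa using h2
    rw [tendsto_iff_norm_sub_tendsto_zero]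
    refine squeeze_zero' (Eventually.of_forall fun R => norm_nonneg _) ?_ htail
    obtain ⟨N, hN⟩ := exists_nat_ge s₀
    filter_upwards [eventually_ge_atTop N, eventually_ge_atTop 1] with R hR hR1
    have hRs : s₀ ≤ R := hN.trans (by exact_mod_cast hR)
    have hw : L ((C * ((n : ℝ) + 3)) • ∑ i : Fin n, callLG i (R : ℝ)) =
        C * (((n : ℝ) + 3) * ∑ i : Fin n, ∫ x, max (x - R) 0 ∂(μ i)) := by
      rw [map_smul, map_sum, smul_eq_mul, mul_assoc]
      congr 2
      exact Finset.sum_congr rfl fun i _ => hcall i R (Nat.cast_nonneg R) _ (fun ω _ => rfl)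
    have hval : ∀ ω, ((C * ((n : ℝ) + 3)) • ∑ i : Fin n, callLG i (R : ℝ) : LG n).1 ω =
        C * (((n : ℝ) + 3) * ∑ i : Fin n, max (ω i.succ - R) 0) := by
      intro ω
      simp only [Submodule.coe_smul, Submodule.coe_sum, Pi.smul_apply, Finset.sum_apply,
        smul_eq_mul, mul_assoc]
      rfl
    have hb : ∀ ω ∈ P, |f.1 ω * cut R ω - f.1 ω| ≤
        C * (((n : ℝ) + 3) * ∑ i : Fin n, max (ω i.succ - R) 0) := by
      intro ω hω
      have h1 : |f.1 ω * cut R ω - f.1 ω| = |f.1 ω| * (1 - cut R ω) := by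
        rw [← abs_of_nonneg (sub_nonneg.2 (cut_le_one R ω)), ← abs_mul, ← abs_neg]
        congr 1; ring
      rw [h1]
      calc |f.1 ω| * (1 - cut R ω) ≤ C * wt ω * (1 - cut R ω) :=
            mul_le_mul_of_nonneg_right (hC ω) (sub_nonneg.2 (cut_le_one R ω))
        _ = C * (wt ω * (1 - cut R ω)) := by ring
        _ ≤ _ := mul_le_mul_of_nonneg_left (tail_bound (hPsub hω) hR1 hRs) hC0
    rw [Real.norm_eq_abs, ← map_sub, ← hw, abs_le]
    constructor
    · rw [← map_neg]
      refine hmono _ _ fun ω hω => ?_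
      have := (abs_le.1 (hb ω hω)).1
      rw [← hval] at this
      exact this
    · refine hmono _ _ fun ω hω => ?_
      have := (abs_le.1 (hb ω hω)).2
      rw [← hval] at this
      exact this
  have hwt : Integrable (wt (n := n)) Q := by
    refine ⟨wt_cont.aestronglyMeasurable, ?_⟩
    rw [hasFiniteIntegral_iff_ofReal (Eventually.of_forall wt_pos)]
    have h1 := lintegral_tendsto_of_tendsto_of_monotone (μ := Q)
      (f := fun (R : ℕ) ω => ENNReal.ofReal (wt ω * cut R ω))
      (F := fun ω => ENNReal.ofReal (wt ω))
      (fun R => (wt_cont.mul (cut_cont R)).measurable.ennreal_ofReal.aemeasurable)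
      (Eventually.of_forall fun ω R R' h => ENNReal.ofReal_le_ofReal
        (mul_le_mul_of_nonneg_left (cut_mono ω h) (wt_pos ω)))
      (Eventually.of_forall fun ω => by
        have := ENNReal.tendsto_ofReal ((cut_tendsto ω).const_mul (wt ω))
        simpa using this)
    refine lt_of_le_of_lt (le_of_tendsto' h1 (fun R => ?_)) (ENNReal.ofReal_lt_top (r := L (wtLG n)))
    obtain ⟨h2, h3⟩ := hint R (wtLG n) wt_cont
    have h4 := ofReal_integral_eq_lintegral_ofReal h2
      (Eventually.of_forall fun ω => mul_nonneg (wt_pos ω) (cut_nonneg R ω))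
    rw [h3] at h4
    refine h4.symm.le.trans (ENNReal.ofReal_le_ofReal (hmono _ _ fun ω _ => ?_))
    exact mul_le_of_le_one_right (wt_pos ω) (cut_le_one R ω)
  refine ⟨Q, fun f hf => ?_⟩
  obtain ⟨C, hC0, hC⟩ := LG_bound f
  have hfi : Integrable f.1 Q := (hwt.const_mul C).mono' hf.aestronglyMeasurable
    (Eventually.of_forall fun ω => hC ω)
  refine ⟨hfi, ?_⟩
  have h1 := tendsto_integral_of_dominated_convergence (μ := Q) (F := fun R : ℕ => (trunc R f).1)
    (f := f.1) (fun ω => C * wt ω) (fun R => (hct R f hf).aestronglyMeasurable)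
    (hwt.const_mul C) (fun R => Eventually.of_forall fun ω => by
      change ‖f.1 ω * cut R ω‖ ≤ _
      rw [Real.norm_eq_abs, abs_mul, abs_of_nonneg (cut_nonneg R ω)]
      exact (mul_le_of_le_one_right (abs_nonneg _) (cut_le_one R ω)).trans (hC ω))
    (Eventually.of_forall fun ω => by
      have := (cut_tendsto ω).const_mul (f.1 ω)
      rw [mul_one] at this
      exact this)
  simp_rw [fun R => (hint R f hf).2] at h1
  exact tendsto_nhds_unique h1 (hlim f)

theorem exists_model {n : ℕ} {s₀ : ℝ} {P : Set (Path n)}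
    (hPsub : P ⊆ Omega n s₀) (hPclosed : IsClosed P) (hPne : P.Nonempty)
    {μ : Fin n → Measure ℝ} [∀ i, IsProbabilityMeasure (μ i)] (hsupp : ∀ i, μ i (Set.Iio 0) = 0)
    (hmom : ∀ i, Integrable (fun x => x) (μ i)) (L : LG n →ₗ[ℝ] ℝ)
    (hpos : ∀ f : LG n, (∀ ω ∈ P, 0 ≤ f.1 ω) → 0 ≤ L f)
    (hone : ∀ f : LG n, (∀ ω ∈ P, f.1 ω = 1) → L f = 1)
    (hcall : ∀ (i : Fin n) (K : ℝ), 0 ≤ K → ∀ f : LG n,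
      (∀ ω ∈ P, f.1 ω = max (ω i.succ - K) 0) → L f = ∫ x, max (x - K) 0 ∂(μ i))
    (hgain : ∀ (ψ : Path n → ℝ), IsGain ψ → ∀ f : LG n, (∀ ω ∈ P, f.1 ω = ψ ω) → L f ≤ 0) :
    ∃ Q : Measure (Path n), Q ∈ MSetP s₀ μ P ∧ ∀ f : LG n, Continuous f.1 →
      Integrable f.1 Q ∧ ∫ ω, f.1 ω ∂Q = L f := by
  obtain ⟨Q, hQ⟩ := exists_measure hPsub hmom L hpos hcall
  have hprob : IsProbabilityMeasure Q := by
    obtain ⟨h1, h2⟩ := hQ ⟨fun _ => 1, 1, fun ω => by simpa using one_le_wt ω⟩ continuous_const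
    rw [hone _ (fun _ _ => rfl)] at h2
    have hfin : IsFiniteMeasure Q := by
      rcases integrable_const_iff.1 h1 with h | h
      · exact absurd h one_ne_zero
      · exact h
    simp only [integral_const, smul_eq_mul, mul_one] at h2
    refine ⟨?_⟩
    rw [measureReal_def] at h2
    rw [← ENNReal.ofReal_toReal (measure_ne_top Q univ), h2, ENNReal.ofReal_one]
  have hP1 : ∀ᵐ ω ∂Q, ω ∈ P := by
    let f : LG n := ⟨fun ω => min 1 (Metric.infDist ω P), 1, fun ω => by
      rw [abs_of_nonneg (le_min zero_le_one Metric.infDist_nonneg), one_mul]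
      exact (min_le_left _ _).trans (one_le_wt ω)⟩
    have hfc : Continuous f.1 := continuous_const.min (Metric.continuous_infDist_pt P)
    obtain ⟨h1, h2⟩ := hQ f hfc
    have hf0 : ∀ ω ∈ P, f.1 ω = 0 := fun ω hω => by
      change min 1 (Metric.infDist ω P) = 0
      rw [Metric.infDist_zero_of_mem hω]; simp
    have h3 : L f = 0 := by
      have a := hpos f (fun ω hω => (hf0 ω hω).ge)
      have b := hpos (-f) (fun ω hω => by
        change 0 ≤ - f.1 ω
        rw [hf0 ω hω]; simp)
      rw [map_neg] at b
      linarith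
    rw [h3] at h2
    rw [integral_eq_zero_iff_of_nonneg (fun ω => le_min zero_le_one Metric.infDist_nonneg) h1] at h2
    filter_upwards [h2] with ω hω
    have hω' : min 1 (Metric.infDist ω P) = 0 := hω
    have h4 : Metric.infDist ω P = 0 := by
      rcases min_choice 1 (Metric.infDist ω P) with h | h
      · rw [h] at hω'; norm_num at hω'
      · rw [h] at hω'; exact hω'
    exact (hPclosed.mem_iff_infDist_zero hPne).2 h4
  have hQP : Q P = 1 := (prob_compl_eq_zero_iff hPclosed.measurableSet).1 (ae_iff.1 hP1)
  have hQO : Q (Omega n s₀) = 1 :=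
    le_antisymm prob_le_one (hQP ▸ measure_mono hPsub)
  have hcoord : ∀ i, Integrable (fun ω : Path n => ω i) Q := fun i =>
    (hQ ⟨fun ω => ω i, 1, fun ω => by rw [one_mul]; exact coord_mem i ω⟩ (continuous_apply i)).1
  refine ⟨Q, ⟨⟨⟨hprob, hQO, fun i => ?_⟩, fun j A hA => ?_⟩, hQP⟩, hQ⟩
  · have hm : Measurable (fun ω : Path n => ω i.succ) := measurable_pi_apply _
    have : IsProbabilityMeasure (Q.map (fun ω : Path n => ω i.succ)) :=
      Measure.isProbabilityMeasure_map hm.aemeasurable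
    refine aux_ext_calls ?_ (hmom i) ?_ (hsupp i) ?_
    · exact (integrable_map_measure aestronglyMeasurable_id hm.aemeasurable).2 (hcoord i.succ)
    · rw [Measure.map_apply hm measurableSet_Iio]
      have h0 : ∀ᵐ ω ∂Q, ¬ (ω ∈ (fun ω : Path n => ω i.succ) ⁻¹' Iio 0) := by
        filter_upwards [hP1] with ω hω
        simpa using (hPsub hω).2 i.succ
      rw [ae_iff] at h0
      simp only [not_not] at h0
      exact h0
    · intro K hK
      rw [integral_map hm.aemeasurable (by fun_prop : Continuous fun x : ℝ => max (x - K) 0).aestronglyMeasurable]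
      have hc : Continuous (callLG i K : LG n).1 := by
        change Continuous fun ω : Path n => max (ω i.succ - K) 0
        fun_prop
      rw [← hcall i K hK (callLG i K) (fun _ _ => rfl)]
      exact (hQ _ hc).2
  · refine aux_cont_to_borel Q (measurable_restr j) ((hcoord _).sub (hcoord _)) ?_ A hA
    intro g hg hg0 hg1
    have hrc : Continuous (restr j : Path n → _) := continuous_pi fun _ => continuous_apply _
    let f : LG n := ⟨fun ω => g (restr j ω) * (ω j.succ - ω j.castSucc), 2, fun ω => by
      rw [abs_mul, abs_of_nonneg (hg0 _)]
      have h1 := coord_mem j.succ ω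
      have h2 := coord_mem j.castSucc ω
      have h3 := abs_sub (ω j.succ) (ω j.castSucc)
      have h4 := mul_le_of_le_one_left (abs_nonneg (ω j.succ - ω j.castSucc)) (hg1 (restr j ω))
      linarith⟩
    have hfc : Continuous f.1 := (hg.comp hrc).mul
      ((continuous_apply _).sub (continuous_apply _))
    have h2 := (hQ f hfc).2
    have h3 := hgain _ (IsGain.single j hg.measurable hg0 hg1) f (fun _ _ => rfl)
    rw [← h2] at h3
    exact h3


/-! ### Upper semicontinuous payoffs -/

/-- Truncation at level `k` of `C wt - H`. -/
def qk {n : ℕ} (C : ℝ) (H : Path n → EReal) (k : ℕ) (y : Path n) : ℝ :=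
  if H y = ⊥ then k else min k (C * wt y - (H y).toReal)

/-- Lipschitz regularization of `C wt - H` on `P`. -/
def gk {n : ℕ} (P : Set (Path n)) (C : ℝ) (H : Path n → EReal) (k : ℕ) (ω : Path n) : ℝ :=
  ⨅ y : P, (qk C H k y + k * dist ω y)

theorem usc_step {n : ℕ} {P : Set (Path n)} (hPne : P.Nonempty) {Q : Measure (Path n)}
    (hQP : ∀ᵐ ω ∂Q, ω ∈ P) (hwt : Integrable (wt (n := n)) Q)
    (H : Path n → EReal) (hHtop : ∀ ω, H ω ≠ ⊤) (hH : UpperSemicontinuousOn H P) {C : ℝ}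
    (hHC : ∀ ω ∈ P, H ω ≤ ((C * wt ω : ℝ) : EReal)) {v : ℝ}
    (hv : ∀ f : LG n, Continuous f.1 → (∀ ω ∈ P, H ω ≤ (f.1 ω : EReal)) →
      Integrable f.1 Q ∧ v ≤ ∫ ω, f.1 ω ∂Q) :
    (v : EReal) ≤ eexpE Q H := by
  have : Nonempty P := hPne.to_subtype
  have hq0 : ∀ k, ∀ y ∈ P, 0 ≤ qk C H k y := by
    intro k y hy
    unfold qk
    split_ifs with h
    · positivity
    · have := hHC y hy
      rw [← EReal.coe_toReal (hHtop y) h, EReal.coe_le_coe_iff] at this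
      exact le_min (by positivity) (by linarith)
  have hterm : ∀ k (ω : Path n) (y : P), 0 ≤ qk C H k y + k * dist ω y := fun k ω y =>
    add_nonneg (hq0 k y y.2) (by positivity)
  have hbdd : ∀ k (ω : Path n), BddBelow (range fun y : P => qk C H k y + k * dist ω y) :=
    fun k ω => ⟨0, by rintro _ ⟨y, rfl⟩; exact hterm k ω y⟩
  have hg0 : ∀ k ω, 0 ≤ gk P C H k ω := fun k ω => le_ciInf (hterm k ω)
  have hgq : ∀ k, ∀ ω ∈ P, gk P C H k ω ≤ qk C H k ω := by
    intro k ω hω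
    have := ciInf_le (hbdd k ω) ⟨ω, hω⟩
    simpa [gk] using this
  have hgc : ∀ k, Continuous (gk P C H k) := by
    intro k
    have : LipschitzWith k (gk P C H k) := by
      refine LipschitzWith.of_le_add_mul _ fun ω ω' => ?_
      rw [← sub_le_iff_le_add]
      refine le_ciInf fun y => ?_
      rw [sub_le_iff_le_add]
      refine (ciInf_le (hbdd k ω) y).trans ?_
      have h1 := mul_le_mul_of_nonneg_left (dist_triangle ω ω' y) (Nat.cast_nonneg (α := ℝ) k)
      simp only [NNReal.coe_natCast]
      linarith
    exact this.continuous
  have hgm : ∀ ω, Monotone fun k => gk P C H k ω := by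
    intro ω k k' h
    have hk : (k : ℝ) ≤ k' := by exact_mod_cast h
    refine ciInf_mono (hbdd k ω) fun y => ?_
    refine add_le_add ?_ (mul_le_mul_of_nonneg_right hk dist_nonneg)
    unfold qk
    split_ifs
    · exact hk
    · exact min_le_min hk le_rfl
  let h : ℕ → Path n → ℝ := fun k ω => min k (gk P C H k ω)
  have h0 : ∀ k ω, 0 ≤ h k ω := fun k ω => le_min (Nat.cast_nonneg k) (hg0 k ω)
  have hc : ∀ k, Continuous (h k) := fun k => continuous_const.min (hgc k)
  have hm : ∀ ω, Monotone fun k => h k ω := fun ω k k' hk =>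
    min_le_min (by exact_mod_cast hk) (hgm ω hk)
  have key : ∀ ω ∈ P, ∀ a : ℝ, 0 ≤ a → H ω < ((C * wt ω - a : ℝ) : EReal) →
      ∃ k, a ≤ h k ω := by
    intro ω hω a ha hlt
    obtain ⟨b, hb1, hb2⟩ := EReal.lt_iff_exists_real_btwn.1 hlt
    rw [EReal.coe_lt_coe_iff] at hb2
    have e1 := hH ω hω b hb1
    have e2 : ∀ᶠ y in 𝓝[P] ω, b < C * wt y - a := by
      have : Continuous fun y : Path n => C * wt y - a :=
        (continuous_const.mul wt_cont).sub continuous_const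
      exact nhdsWithin_le_nhds (this.continuousAt.eventually (lt_mem_nhds hb2))
    obtain ⟨δ, hδ, hball⟩ := Metric.mem_nhdsWithin_iff.1 (e1.and e2)
    obtain ⟨k, hk⟩ := exists_nat_ge (max a (a / δ))
    have hk1 := (le_max_left _ _).trans hk
    have hk2 := (le_max_right _ _).trans hk
    refine ⟨k, le_min hk1 (le_ciInf fun y => ?_)⟩
    by_cases hy : dist ω y < δ
    · have h1 := hball ⟨by rw [Metric.mem_ball, dist_comm]; exact hy, y.2⟩
      obtain ⟨h2, h3⟩ := h1
      have h4 : a ≤ qk C H k y := by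
        unfold qk
        split_ifs with hb
        · exact hk1
        · rw [← EReal.coe_toReal (hHtop y) hb, EReal.coe_lt_coe_iff] at h2
          exact le_min hk1 (by linarith)
      have : 0 ≤ (k : ℝ) * dist ω y := by positivity
      linarith
    · rw [div_le_iff₀ hδ] at hk2
      have h1 := mul_le_mul_of_nonneg_left (not_lt.1 hy) (Nat.cast_nonneg (α := ℝ) k)
      linarith [hq0 k y y.2]
  have hint : ∀ k, Integrable (h k) Q ∧ ∫ ω, h k ω ∂Q ≤ C * ∫ ω, wt ω ∂Q - v := by
    intro k
    let f : LG n := ⟨fun ω => C * wt ω - h k ω, |C| + k, fun ω => by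
      have h1 : |h k ω| ≤ k := by
        rw [abs_of_nonneg (h0 k ω)]; exact min_le_left _ _
      have h2 := abs_sub (C * wt ω) (h k ω)
      rw [abs_mul, abs_of_nonneg (wt_pos ω)] at h2
      have h3 := le_mul_of_one_le_right (Nat.cast_nonneg (α := ℝ) k) (one_le_wt ω)
      linarith⟩
    have hfc : Continuous f.1 := (continuous_const.mul wt_cont).sub (hc k)
    obtain ⟨h1, h2⟩ := hv f hfc (by
      intro ω hω
      change H ω ≤ ((C * wt ω - h k ω : ℝ) : EReal)
      by_cases hb : H ω = ⊥
      · rw [hb]; exact bot_le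
      · have h1 := (min_le_right (k : ℝ) _).trans (hgq k ω hω)
        unfold qk at h1
        rw [if_neg hb] at h1
        have h2 := h1.trans (min_le_right _ _)
        rw [← EReal.coe_toReal (hHtop ω) hb, EReal.coe_le_coe_iff]
        change h k ω ≤ _ at h2
        linarith)
    have h3 : Integrable (h k) Q := by
      have := (hwt.const_mul C).sub h1
      refine this.congr (Eventually.of_forall fun ω => ?_)
      change C * wt ω - (C * wt ω - h k ω) = h k ω
      ring
    refine ⟨h3, ?_⟩
    have h4 : ∫ ω, f.1 ω ∂Q = C * ∫ ω, wt ω ∂Q - ∫ ω, h k ω ∂Q := by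
      change ∫ ω, (C * wt ω - h k ω) ∂Q = _
      rw [integral_sub (hwt.const_mul C) h3, integral_const_mul]
    linarith
  have hnn : 0 ≤ C * ∫ ω, wt ω ∂Q - v := (integral_nonneg (h0 0)).trans (hint 0).2
  let F : Path n → ℝ≥0∞ := fun ω => ⨆ k, ENNReal.ofReal (h k ω)
  have hFm : Measurable F := Measurable.iSup fun k => (hc k).measurable.ennreal_ofReal
  have hF : ∫⁻ ω, F ω ∂Q ≤ ENNReal.ofReal (C * ∫ ω, wt ω ∂Q - v) := by
    rw [lintegral_iSup (fun k => (hc k).measurable.ennreal_ofReal)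
      (fun k k' hk ω => ENNReal.ofReal_le_ofReal (hm ω hk))]
    refine iSup_le fun k => ?_
    rw [← ofReal_integral_eq_lintegral_ofReal (hint k).1 (Eventually.of_forall (h0 k))]
    exact ENNReal.ofReal_le_ofReal (hint k).2
  have hFtop : ∫⁻ ω, F ω ∂Q ≠ ⊤ := (hF.trans_lt ENNReal.ofReal_lt_top).ne
  have hFae : ∀ᵐ ω ∂Q, F ω < ⊤ := ae_lt_top hFm hFtop
  have hFint : Integrable (fun ω => (F ω).toReal) Q :=
    integrable_toReal_of_lintegral_ne_top hFm.aemeasurable hFtop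
  have hFle : ∫ ω, (F ω).toReal ∂Q ≤ C * ∫ ω, wt ω ∂Q - v := by
    rw [integral_toReal hFm.aemeasurable hFae]
    exact ENNReal.toReal_le_of_le_ofReal hnn hF
  have hle : ∀ᵐ ω ∂Q, ((C * wt ω - (F ω).toReal : ℝ) : EReal) ≤ H ω := by
    filter_upwards [hQP, hFae] with ω hω hfin
    by_contra hlt
    rw [not_le] at hlt
    obtain ⟨b, hb1, hb2⟩ := EReal.lt_iff_exists_real_btwn.1 hlt
    rw [EReal.coe_lt_coe_iff] at hb2
    have hF0 : 0 ≤ (F ω).toReal := ENNReal.toReal_nonneg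
    obtain ⟨k, hk⟩ := key ω hω (C * wt ω - b) (by linarith) (by
      rw [sub_sub_cancel]; exact hb1)
    have h1 : ENNReal.ofReal (h k ω) ≤ F ω := le_iSup (fun k => ENNReal.ofReal (h k ω)) k
    have h2 := (ENNReal.ofReal_le_iff_le_toReal hfin.ne).1 h1
    linarith
  refine le_trans ?_ (eexpE_mono hle)
  rw [eexpE_coe (f := fun ω => C * wt ω - (F ω).toReal) ((hwt.const_mul C).sub hFint), EReal.coe_le_coe_iff,
    integral_sub (hwt.const_mul C) hFint, integral_const_mul]
  linarith

theorem strong_duality {n : ℕ} {s₀ : ℝ} (hs₀ : 0 < s₀)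
    (P : Set (Path n)) (hPsub : P ⊆ Omega n s₀) (hPclosed : IsClosed P)
    (μ : Fin n → Measure ℝ) [∀ i, IsProbabilityMeasure (μ i)]
    (hsupp : ∀ i, μ i (Set.Iio 0) = 0) (hmom : ∀ i, Integrable (fun x => x) (μ i))
    (hne : (MSetP s₀ μ P).Nonempty)
    (G : (Fin n → ℝ) → EReal) (hGtop : ∀ s, G s ≠ ⊤)
    (hGusc : UpperSemicontinuousOn G {s | ∀ i, 0 ≤ s i})
    (K : ℝ) (hG : ∀ s : Fin n → ℝ, (∀ i, 0 ≤ s i) → G s ≤ ((K * (1 + ∑ i, s i) : ℝ) : EReal)) :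
    V Static.callPayoff (fun i K' => ∫ x, max (x - K') 0 ∂(μ i)) P
        (fun ω => G (tailCoords ω)) ≤
      ⨆ Q ∈ MSetP s₀ μ P, eexpE Q (fun ω => G (tailCoords ω)) := by
  have hPne : P.Nonempty := by
    obtain ⟨Q, hQ⟩ := hne
    have h1 := hQ.2
    by_contra h
    rw [not_nonempty_iff_eq_empty] at h
    rw [h, measure_empty] at h1
    exact zero_ne_one h1
  by_contra hlt
  rw [not_le] at hlt
  obtain ⟨v, hv1, hv2⟩ := EReal.lt_iff_exists_real_btwn.1 hlt
  obtain ⟨L, hpos, hone, hcall, hgain, hLG⟩ := exists_functional hs₀ hPsub hPclosed hsupp hmom hne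
    (fun ω => G (tailCoords ω)) (fun ω => hGtop _) hv2
  obtain ⟨Q, hQ, hQL⟩ := exists_model hPsub hPclosed hPne hsupp hmom L hpos hone hcall hgain
  have hpr : IsProbabilityMeasure Q := hQ.1.1.1
  have hle : (v : EReal) ≤ eexpE Q (fun ω => G (tailCoords ω)) := by
    refine usc_step (P := P) (C := |K|) hPne (ae_of_measure_eq_one hPclosed.measurableSet hQ.2)
      (hQL (wtLG n) wt_cont).1 _ (fun ω => hGtop _) ?_ ?_ ?_
    · intro ω hω y hy
      have hcont : ContinuousWithinAt (tailCoords : Path n → _) P ω :=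
        (continuous_pi fun i => continuous_apply _).continuousWithinAt
      have hmaps : MapsTo (tailCoords : Path n → _) P {s | ∀ i, 0 ≤ s i} :=
        fun ω hω i => (hPsub hω).2 _
      exact (hcont.tendsto_nhdsWithin hmaps).eventually (hGusc (tailCoords ω) (hmaps hω) y hy)
    · intro ω hω
      have hO := hPsub hω
      refine (hG (tailCoords ω) (fun i => hO.2 _)).trans ?_
      rw [EReal.coe_le_coe_iff]
      have h1 : 0 ≤ ∑ i, tailCoords ω i := Finset.sum_nonneg fun i _ => hO.2 _
      have h2 : 1 + ∑ i, tailCoords ω i ≤ wt ω := by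
        rw [wt, Fin.sum_univ_succ]
        have : ∑ i, tailCoords ω i = ∑ i : Fin n, |ω i.succ| :=
          Finset.sum_congr rfl fun i _ => (abs_of_nonneg (hO.2 _)).symm
        rw [this]
        linarith [abs_nonneg (ω 0)]
      calc K * (1 + ∑ i, tailCoords ω i) ≤ |K| * (1 + ∑ i, tailCoords ω i) :=
            mul_le_mul_of_nonneg_right (le_abs_self K) (by linarith)
        _ ≤ |K| * wt ω := mul_le_mul_of_nonneg_left h2 (abs_nonneg K)
    · intro f hf hfG
      obtain ⟨h1, h2⟩ := hQL f hf
      exact ⟨h1, h2 ▸ hLG f hfG⟩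
  have := hle.trans (le_iSup₂ (f := fun Q (_ : Q ∈ MSetP s₀ μ P) =>
    eexpE Q (fun ω => G (tailCoords ω))) Q hQ)
  exact absurd hv1 (not_lt.2 this)

/-- Corollary 3.5: duality with general static functions of linear
growth, together with the superhedging price using call options; if all marginals
have mean `s₀`, the same equalities hold with signed dynamic positions. -/
theorem duality_calls_marginals
    {n : ℕ} (hn : 1 ≤ n) {s₀ : ℝ} (hs₀ : 0 < s₀)
    (P : Set (Path n)) (hPsub : P ⊆ Omega n s₀) (hPclosed : IsClosed P)
    (μ : Fin n → Measure ℝ) (hprob : ∀ i, IsProbabilityMeasure (μ i))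
    (hsupp : ∀ i, μ i (Set.Iio 0) = 0) (hmom : ∀ i, Integrable (fun x => x) (μ i))
    (hA : AssumptionA s₀ μ) (hne : (MSetP s₀ μ P).Nonempty)
    (G : (Fin n → ℝ) → EReal) (hGtop : ∀ s, G s ≠ ⊤)
    (hGusc : UpperSemicontinuousOn G {s | ∀ i, 0 ≤ s i})
    (K : ℝ) (hG : ∀ s : Fin n → ℝ, (∀ i, 0 ≤ s i) → G s ≤ ((K * (1 + ∑ i, s i) : ℝ) : EReal)) :
    ((⨆ Q ∈ MSetP s₀ μ P, eexpE Q (fun ω => G (tailCoords ω))) =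
      sInf {q : EReal | ∃ (u : Fin (n + 1) → ℝ → ℝ) (D : Dyn n),
        (∀ i, Measurable (u i)) ∧ (∀ i, ∃ C : ℝ, ∀ x : ℝ, 0 ≤ x → |u i x| ≤ C * (1 + |x|)) ∧
        D.Nonneg ∧ q = (linGrowthCost s₀ μ u : EReal) ∧
        ∀ ω ∈ P, G (tailCoords ω) ≤
          ((∑ i : Fin (n + 1), u i (ω i) + D.gains ω : ℝ) : EReal)} ∧
     (⨆ Q ∈ MSetP s₀ μ P, eexpE Q (fun ω => G (tailCoords ω))) =
      V Static.callPayoff (fun i K' => ∫ x, max (x - K') 0 ∂(μ i)) P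
        (fun ω => G (tailCoords ω))) ∧
    ((∀ i, ∫ x, x ∂(μ i) = s₀) →
      ((⨆ Q ∈ MSetP s₀ μ P, eexpE Q (fun ω => G (tailCoords ω))) =
        sInf {q : EReal | ∃ (u : Fin (n + 1) → ℝ → ℝ) (D : Dyn n),
          (∀ i, Measurable (u i)) ∧ (∀ i, ∃ C : ℝ, ∀ x : ℝ, 0 ≤ x → |u i x| ≤ C * (1 + |x|)) ∧
          q = (linGrowthCost s₀ μ u : EReal) ∧
          ∀ ω ∈ P, G (tailCoords ω) ≤
            ((∑ i : Fin (n + 1), u i (ω i) + D.gains ω : ℝ) : EReal)} ∧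
       (⨆ Q ∈ MSetP s₀ μ P, eexpE Q (fun ω => G (tailCoords ω))) =
        Vsigned Static.callPayoff (fun i K' => ∫ x, max (x - K') 0 ∂(μ i)) P
          (fun ω => G (tailCoords ω)))) := by
  haveI := hprob
  have strong := strong_duality hs₀ P hPsub hPclosed μ hsupp hmom hne G hGtop hGusc K hG
  refine ⟨⟨le_antisymm ?_ ?_, le_antisymm ?_ strong⟩, fun hmean =>
    ⟨le_antisymm ?_ ?_, le_antisymm ?_ ?_⟩⟩
  · refine iSup₂_le fun Q hQ => le_sInf ?_
    rintro q ⟨u, D, hu, hu', hD, rfl, h⟩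
    exact weak_duality hPclosed hsupp hmom hQ _ u D hu hu' (Or.inl hD) h
  · refine le_trans (sInf_le_sInf ?_) strong
    rintro q ⟨X, D, hD, rfl, h⟩
    obtain ⟨u, hu, hu', hcost, hpay⟩ := IsStat.toLin (s₀ := s₀) hmom X
    refine ⟨u, D, hu, hu', hD, by rw [hcost], fun ω hω => ?_⟩
    rw [hpay]
    exact h ω hω
  · refine iSup₂_le fun Q hQ => le_sInf ?_
    rintro q ⟨X, D, hD, rfl, h⟩
    obtain ⟨u, hu, hu', hcost, hpay⟩ := IsStat.toLin (s₀ := s₀) hmom X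
    rw [← hcost]
    refine weak_duality hPclosed hsupp hmom hQ _ u D hu hu' (Or.inl hD) fun ω hω => ?_
    rw [hpay]
    exact h ω hω
  · refine iSup₂_le fun Q hQ => le_sInf ?_
    rintro q ⟨u, D, hu, hu', rfl, h⟩
    exact weak_duality hPclosed hsupp hmom hQ _ u D hu hu' (Or.inr hmean) h
  · refine le_trans (sInf_le_sInf ?_) strong
    rintro q ⟨X, D, hD, rfl, h⟩
    obtain ⟨u, hu, hu', hcost, hpay⟩ := IsStat.toLin (s₀ := s₀) hmom X
    refine ⟨u, D, hu, hu', by rw [hcost], fun ω hω => ?_⟩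
    rw [hpay]
    exact h ω hω
  · refine iSup₂_le fun Q hQ => le_sInf ?_
    rintro q ⟨X, D, rfl, h⟩
    obtain ⟨u, hu, hu', hcost, hpay⟩ := IsStat.toLin (s₀ := s₀) hmom X
    rw [← hcost]
    refine weak_duality hPclosed hsupp hmom hQ _ u D hu hu' (Or.inr hmean) fun ω hω => ?_
    rw [hpay]
    exact h ω hω
  · refine le_trans (sInf_le_sInf ?_) strong
    rintro q ⟨X, D, hD, rfl, h⟩
    exact ⟨X, D, rfl, h⟩

end RobustFin
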